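/- arXiv:1012.3851 — 9 statements merged into one kernel-verified Lean document; each statement's English description precedes it below -/
import Mathlib

section
/- Let U ⊆ ℝ^m be a non-empty open convex set and let f, g : U → ℝ. Assume g is twice differentiable on U and its Hessian is uniformly positive definite: there is a constant 0 < K < ∞ such that yᵀ (∂²g/∂x∂xᵀ)(x) y ≥ K‖y‖² for all x ∈ U and all y ∈ ℝ^m. If u ∈ U minimizes f over U and v ∈ U minimizes g over U, then ‖u − v‖ ≤ 2 K^{−1/2} √(sup_{x∈U} |f(x) − g(x)|). -/
open scoped ENNReal

/-- Lemma on closeness of minimizers.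
Let `U ⊆ ℝ^m` be a non-empty open convex set and `f, g : U → ℝ`.  Assume `g` is twice
differentiable on `U` with uniformly positive definite Hessian:
`yᵀ g''(x) y ≥ K ‖y‖²` for all `x ∈ U`, `y`, where `0 < K`.  If `u ∈ U` minimizes `f`
over `U` and `v ∈ U` minimizes `g` over `U`, then
`‖u − v‖ ≤ 2 K^{-1/2} √(sup_{x ∈ U} |f x − g x|)`, the supremum being taken in `[0,∞]`. -/
theorem stmt0_closeness_of_minimizers
    {m : ℕ} (U : Set (EuclideanSpace ℝ (Fin m)))
    (hUne : U.Nonempty) (hUopen : IsOpen U) (hUconv : Convex ℝ U)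
    (f g : EuclideanSpace ℝ (Fin m) → ℝ)
    (g' : EuclideanSpace ℝ (Fin m) → EuclideanSpace ℝ (Fin m) →L[ℝ] ℝ)
    (g'' : EuclideanSpace ℝ (Fin m) →
      EuclideanSpace ℝ (Fin m) →L[ℝ] EuclideanSpace ℝ (Fin m) →L[ℝ] ℝ)
    (hg' : ∀ x ∈ U, HasFDerivAt g (g' x) x)
    (hg'' : ∀ x ∈ U, HasFDerivAt g' (g'' x) x)
    (K : ℝ) (hK : 0 < K)
    (hHess : ∀ x ∈ U, ∀ y : EuclideanSpace ℝ (Fin m), K * ‖y‖ ^ 2 ≤ g'' x y y)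
    (u v : EuclideanSpace ℝ (Fin m)) (hu : u ∈ U) (hv : v ∈ U)
    (humin : ∀ x ∈ U, f u ≤ f x) (hvmin : ∀ x ∈ U, g v ≤ g x) :
    ENNReal.ofReal ‖u - v‖ ≤
      ENNReal.ofReal (2 * K ^ (-(1 : ℝ) / 2)) *
        (⨆ x ∈ U, ENNReal.ofReal |f x - g x|) ^ ((1 : ℝ) / 2) := by
  have hmin0 : g' v = 0 := by
    have hl : IsLocalMin g v := by
      filter_upwards [hUopen.mem_nhds hv] with x hx using hvmin x hx
    exact hl.hasFDerivAt_eq_zero (hg' v hv)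
  set w := u - v with hw
  have hmem : ∀ t ∈ Set.Icc (0:ℝ) 1, v + t • w ∈ U := by
    intro t ht
    exact hUconv.add_smul_sub_mem hv hu ht
  have hline : ∀ t : ℝ, HasDerivAt (fun t : ℝ => v + t • w) w t := by
    intro t
    simpa using ((hasDerivAt_id t).smul_const w).const_add v
  have hphi : ∀ t ∈ Set.Icc (0:ℝ) 1,
      HasDerivAt (fun t : ℝ => g (v + t • w)) (g' (v + t • w) w) t := by
    intro t ht
    exact (hg' _ (hmem t ht)).comp_hasDerivAt t (hline t)
  have hphi2 : ∀ t ∈ Set.Icc (0:ℝ) 1,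
      HasDerivAt (fun t : ℝ => g' (v + t • w) w) (g'' (v + t • w) w w) t := by
    intro t ht
    have h1 : HasDerivAt (fun t : ℝ => g' (v + t • w)) (g'' (v + t • w) w) t :=
      (hg'' _ (hmem t ht)).comp_hasDerivAt t (hline t)
    simpa using h1.clm_apply (hasDerivAt_const t w)
  have hd1 : ∀ t ∈ Set.Icc (0:ℝ) 1,
      HasDerivAt (fun t : ℝ => g' (v + t • w) w - t * (K * ‖w‖ ^ 2))
        (g'' (v + t • w) w w - K * ‖w‖ ^ 2) t := by
    intro t ht
    have h1 : HasDerivAt (fun t : ℝ => t * (K * ‖w‖ ^ 2)) (K * ‖w‖ ^ 2) t := by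
      simpa using (hasDerivAt_id t).mul_const (K * ‖w‖ ^ 2)
    exact (hphi2 t ht).sub h1
  have hm1 : MonotoneOn (fun t : ℝ => g' (v + t • w) w - t * (K * ‖w‖ ^ 2)) (Set.Icc 0 1) := by
    refine monotoneOn_of_hasDerivWithinAt_nonneg (convex_Icc 0 1)
      (fun t ht => (hd1 t ht).continuousAt.continuousWithinAt)
      (fun t ht => (hd1 t (interior_subset ht)).hasDerivWithinAt) ?_
    intro t ht
    have := hHess _ (hmem t (interior_subset ht)) w
    linarith
  have hd2 : ∀ t ∈ Set.Icc (0:ℝ) 1,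
      HasDerivAt (fun t : ℝ => g (v + t • w) - t ^ 2 * (K * ‖w‖ ^ 2 / 2))
        (g' (v + t • w) w - t * (K * ‖w‖ ^ 2)) t := by
    intro t ht
    have h1 : HasDerivAt (fun t : ℝ => t ^ 2 * (K * ‖w‖ ^ 2 / 2)) (t * (K * ‖w‖ ^ 2)) t := by
      have h2 := (hasDerivAt_pow 2 t).mul_const (K * ‖w‖ ^ 2 / 2)
      have e : ((2 : ℕ) : ℝ) * t ^ (2 - 1) * (K * ‖w‖ ^ 2 / 2) = t * (K * ‖w‖ ^ 2) := by
        norm_num; ring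
      rw [e] at h2
      exact h2
    exact (hphi t ht).sub h1
  have hm2 : MonotoneOn (fun t : ℝ => g (v + t • w) - t ^ 2 * (K * ‖w‖ ^ 2 / 2))
      (Set.Icc 0 1) := by
    refine monotoneOn_of_hasDerivWithinAt_nonneg (convex_Icc 0 1)
      (fun t ht => (hd2 t ht).continuousAt.continuousWithinAt)
      (fun t ht => (hd2 t (interior_subset ht)).hasDerivWithinAt) ?_
    intro t ht
    have ht' := interior_subset ht
    have := hm1 (Set.left_mem_Icc.2 zero_le_one) ht' ht'.1
    simpa [hmin0] using this
  have key : K * ‖w‖ ^ 2 / 2 ≤ g u - g v := by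
    have := hm2 (Set.left_mem_Icc.2 zero_le_one) (Set.right_mem_Icc.2 zero_le_one) zero_le_one
    have e : v + w = u := by simp [hw]
    simp [e] at this
    linarith
  have hKp : 0 < K ^ (-(1 : ℝ) / 2) := Real.rpow_pos_of_pos hK _
  set S := ⨆ x ∈ U, ENNReal.ofReal |f x - g x| with hS
  have hSle : ∀ x ∈ U, ENNReal.ofReal |f x - g x| ≤ S := fun x hx =>
    le_iSup₂ (f := fun x (_ : x ∈ U) => ENNReal.ofReal |f x - g x|) x hx
  by_cases htop : S = ⊤
  · rw [htop, ENNReal.top_rpow_of_pos (by norm_num), ENNReal.mul_top]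
    · exact le_top
    · simpa using hKp
  · have hle : ∀ x ∈ U, |f x - g x| ≤ S.toReal := fun x hx =>
      (ENNReal.ofReal_le_iff_le_toReal htop).1 (hSle x hx)
    have h1 := abs_le.1 (hle u hu)
    have h2 := abs_le.1 (hle v hv)
    have h3 := humin v hv
    have h4 : K * ‖w‖ ^ 2 ≤ 4 * S.toReal := by linarith
    have hSn : 0 ≤ S.toReal := ENNReal.toReal_nonneg
    rw [← ENNReal.ofReal_toReal htop, ENNReal.ofReal_rpow_of_nonneg hSn (by norm_num),
      ← ENNReal.ofReal_mul (by positivity)]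
    apply ENNReal.ofReal_le_ofReal
    have hsq : (K ^ (-(1 : ℝ) / 2)) ^ 2 = K⁻¹ := by
      rw [← Real.rpow_natCast, ← Real.rpow_mul hK.le, ← Real.rpow_neg_one]
      norm_num
    rw [← Real.sqrt_eq_rpow]
    refine (sq_le_sq₀ (norm_nonneg _) ?_).1 ?_
    · positivity
    rw [mul_pow, mul_pow, hsq, Real.sq_sqrt hSn]
    have : ‖w‖ ^ 2 ≤ 4 * S.toReal / K := by
      rw [le_div_iff₀ hK]; linarith
    calc ‖w‖ ^ 2 ≤ 4 * S.toReal / K := this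
      _ = _ := by rw [div_eq_mul_inv]; ring
end

section
/- Let (Λ,𝒜,P) be a probability space, S and T non-empty sets, and d : T × T → [0,∞) a non-negative real-valued function. For each k ∈ ℕ let H_k : S × T × Λ → ℝ be such that ω ↦ H_k(σ,τ,ω) is measurable for every (σ,τ), and let H : S × T → ℝ. Suppose there are constants C > 0, α > 0 and a map τ : S → T such that H(σ,τ') − H(σ,τ(σ)) ≤ −C · d(τ',τ(σ))^α for all σ ∈ S and all τ' ∈ T. Suppose there are functions φ_k : (0,∞) → ℝ and a constant β < α such that δ ↦ δ^{−β} φ_k(δ) is non-increasing for every k, and such that for every δ > 0 and every k there exists a measurable function G_{k,δ} : Λ → [0,∞] with G_{k,δ}(ω) ≥ sup_{σ∈S} sup_{τ'∈T, d(τ',τ(σ))≤δ} √k · |(H_k(σ,τ',ω) − H(σ,τ')) − (H_k(σ,τ(σ),ω) − H(σ,τ(σ)))| for all ω ∈ Λ and ∫_Λ G_{k,δ} dP ≤ φ_k(δ). Suppose further that for every σ ∈ S and every k the map τ̂_k(σ) : Λ → T satisfies H_k(σ, τ̂_k(σ)(ω), ω) ≥ H_k(σ, τ', ω) for all τ' ∈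 T and all ω ∈ Λ. Finally, let (r_k) be a sequence of positive reals with sup_{k∈ℕ} r_k^α φ_k(r_k^{−1}) / √k < ∞. Then: (i) for every σ ∈ S, τ(σ) is a maximizer of H(σ,·) over T; and (ii) lim_{M→∞} limsup_{k→∞} P^*({ω ∈ Λ : r_k · sup_{σ∈S} d(τ̂_k(σ)(ω), τ(σ)) > M}) = 0, where P^* denotes the outer measure induced by P (i.e., P applied to possibly non-measurable sets via its outer-measure extension). -/
open MeasureTheory Filter
open scoped ENNReal

/-- shell probability bound -/
theorem shell_bound_aux
    {Λ : Type*} [MeasurableSpace Λ] (P : Measure Λ)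
    {S T : Type*}
    (d : T → T → ℝ)
    (Hk : S → T → Λ → ℝ)
    (H : S → T → ℝ)
    (C α : ℝ) (hC : 0 < C) (hα : 0 < α)
    (τ : S → T)
    (hconc : ∀ σ τ', H σ τ' - H σ (τ σ) ≤ -C * d τ' (τ σ) ^ α)
    (φ : ℝ → ℝ) (β : ℝ)
    (hφ_mono : ∀ δ₁ δ₂ : ℝ, 0 < δ₁ → δ₁ ≤ δ₂ →
      δ₂ ^ (-β) * φ δ₂ ≤ δ₁ ^ (-β) * φ δ₁)
    (s : ℝ) (hs : 0 < s)
    (hmod : ∀ (δ : ℝ), 0 < δ → ∃ G : Λ → ℝ≥0∞, Measurable G ∧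
      (∀ ω, (⨆ σ : S, ⨆ τ' : T, ⨆ _ : d τ' (τ σ) ≤ δ,
        ENNReal.ofReal (s *
          |(Hk σ τ' ω - H σ τ') - (Hk σ (τ σ) ω - H σ (τ σ))|)) ≤ G ω) ∧
      ∫⁻ ω, G ω ∂P ≤ ENNReal.ofReal (φ δ))
    (τh : S → Λ → T)
    (hmax : ∀ σ ω τ', Hk σ τ' ω ≤ Hk σ (τh σ ω) ω)
    (r : ℝ) (hr : 0 < r) (B : ℝ)
    (hrate : r ^ α * φ r⁻¹ / s ≤ B) (n : ℕ) :
    P {ω | ∃ σ : S, 2 ^ n ≤ r * d (τh σ ω) (τ σ) ∧ r * d (τh σ ω) (τ σ) ≤ 2 ^ (n+1)} ≤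
      ENNReal.ofReal ((B * 2 ^ β / C) * ((2:ℝ) ^ (β - α)) ^ n) := by
  have hδ : (0:ℝ) < 2 ^ (n+1) / r := by positivity
  obtain ⟨G, hGm, hG, hGi⟩ := hmod _ hδ
  set t : ℝ := s * (C * (2 ^ n / r) ^ α) with ht
  have htpos : 0 < t := by positivity
  have hsub : {ω | ∃ σ : S, 2 ^ n ≤ r * d (τh σ ω) (τ σ) ∧ r * d (τh σ ω) (τ σ) ≤ 2 ^ (n+1)}
      ⊆ {ω | ENNReal.ofReal t ≤ G ω} := by
    rintro ω ⟨σ, h1, h2⟩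
    refine le_trans ?_ (hG ω)
    refine le_trans ?_ (le_iSup _ σ)
    refine le_trans ?_ (le_iSup _ (τh σ ω))
    have h3 : d (τh σ ω) (τ σ) ≤ 2 ^ (n+1) / r := by
      rw [le_div_iff₀ hr]; linarith
    refine le_trans ?_ (le_iSup _ h3)
    apply ENNReal.ofReal_le_ofReal
    rw [ht]
    apply mul_le_mul_of_nonneg_left _ hs.le
    refine le_trans ?_ (le_abs_self _)
    have h4 : 2 ^ n / r ≤ d (τh σ ω) (τ σ) := by
      rw [div_le_iff₀ hr]; linarith
    have h5 : (2 ^ n / r) ^ α ≤ d (τh σ ω) (τ σ) ^ α :=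
      Real.rpow_le_rpow (by positivity) h4 hα.le
    have h6 := hconc σ (τh σ ω)
    have h7 := hmax σ ω (τ σ)
    have h8 := mul_le_mul_of_nonneg_left h5 hC.le
    linarith
  have hM : P {ω | ENNReal.ofReal t ≤ G ω} ≤ (∫⁻ ω, G ω ∂P) / ENNReal.ofReal t :=
    meas_ge_le_lintegral_div hGm.aemeasurable (by simpa using htpos) ENNReal.ofReal_ne_top
  refine (measure_mono hsub).trans (hM.trans ?_)
  refine (ENNReal.div_le_div_right hGi _).trans ?_
  rw [← ENNReal.ofReal_div_of_pos htpos]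
  apply ENNReal.ofReal_le_ofReal
  rw [div_le_iff₀ htpos]
  have hm := hφ_mono r⁻¹ (2 ^ (n+1) / r) (by positivity) (by
    rw [inv_eq_one_div]; gcongr; exact one_le_pow₀ (by norm_num))
  rw [div_le_iff₀ hs] at hrate
  have e1 : ((2:ℝ) ^ (n+1) / r) ^ (-β) = ((2:ℝ) ^ β * ((2:ℝ) ^ β) ^ n)⁻¹ * r⁻¹ ^ (-β) := by
    rw [div_eq_mul_inv, Real.mul_rpow (by positivity) (by positivity), Real.rpow_neg (by positivity),
      ← pow_succ', ← Real.rpow_natCast, ← Real.rpow_natCast, ← Real.rpow_mul (by norm_num),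
      ← Real.rpow_mul (by norm_num), mul_comm β]
  have e2 : ((2:ℝ) ^ n / r) ^ α = ((2:ℝ) ^ α) ^ n / r ^ α := by
    rw [Real.div_rpow (by positivity) hr.le, ← Real.rpow_natCast, ← Real.rpow_natCast,
      ← Real.rpow_mul (by norm_num), ← Real.rpow_mul (by norm_num), mul_comm α]
  rw [e1] at hm
  have hp : 0 < r⁻¹ ^ (-β) := by positivity
  have hra : 0 < r ^ α := by positivity
  have hm2 : φ (2 ^ (n+1) / r) ≤ ((2:ℝ) ^ β * ((2:ℝ) ^ β) ^ n) * φ r⁻¹ := by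
    have : ((2:ℝ) ^ β * ((2:ℝ) ^ β) ^ n)⁻¹ * φ (2 ^ (n+1) / r) ≤ φ r⁻¹ := by
      refine le_of_mul_le_mul_left ?_ hp
      linarith
    rwa [inv_mul_le_iff₀ (by positivity)] at this
  have hm3 : φ r⁻¹ ≤ B * s / r ^ α := by
    rw [le_div_iff₀ hra]; linarith
  refine hm2.trans ((mul_le_mul_of_nonneg_left hm3 (by positivity)).trans (le_of_eq ?_))
  rw [ht, e2, Real.rpow_sub (by norm_num), div_pow]
  field_simp

/-- uniform-in-parameter rate-of-convergence theorem for M-estimators.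
Let `(Λ,𝒜,P)` be a probability space, `S`, `T` non-empty sets, `d : T × T → [0,∞)`,
`H_k : S × T × Λ → ℝ` measurable in `ω`, and `H : S × T → ℝ`.  Assume the curvature
condition `H(σ,τ') − H(σ,τ(σ)) ≤ −C d(τ',τ(σ))^α`; assume the modulus-of-continuity
condition, expressed via measurable majorants `G_{k,δ}` of the centered empirical suprema
whose integrals are bounded by `φ_k(δ)`, where `δ ↦ δ^{−β} φ_k(δ)` is non-increasing for
some `β < α`; assume `τ̂_k(σ)(ω)` maximizes `H_k(σ,·,ω)`; and let `r_k > 0` satisfy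
`sup_k r_k^α φ_k(r_k⁻¹)/√k < ∞`.  Then `τ(σ)` maximizes `H(σ,·)` for every `σ`, and
`lim_{M→∞} limsup_{k→∞} P^*(r_k · sup_{σ∈S} d(τ̂_k(σ), τ(σ)) > M) = 0` (the event
`sup_σ r_k d > M` is encoded as `∃ σ, r_k d > M`; `P` applied to an arbitrary set is its
outer-measure extension). -/
theorem stmt2_uniform_rate_of_convergence
    {Λ : Type*} [MeasurableSpace Λ] (P : Measure Λ) [IsProbabilityMeasure P]
    {S T : Type*} [Nonempty S] [Nonempty T]
    (d : T → T → ℝ) (hd : ∀ t t', 0 ≤ d t t')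
    (Hk : ℕ → S → T → Λ → ℝ) (hHk_meas : ∀ k σ τ', Measurable fun ω => Hk k σ τ' ω)
    (H : S → T → ℝ)
    (C α : ℝ) (hC : 0 < C) (hα : 0 < α)
    (τ : S → T)
    (hconc : ∀ σ τ', H σ τ' - H σ (τ σ) ≤ -C * d τ' (τ σ) ^ α)
    (φ : ℕ → ℝ → ℝ) (β : ℝ) (hβ : β < α)
    (hφ_mono : ∀ k, ∀ δ₁ δ₂ : ℝ, 0 < δ₁ → δ₁ ≤ δ₂ →
      δ₂ ^ (-β) * φ k δ₂ ≤ δ₁ ^ (-β) * φ k δ₁)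
    (hmod : ∀ (k : ℕ) (δ : ℝ), 0 < δ → ∃ G : Λ → ℝ≥0∞, Measurable G ∧
      (∀ ω, (⨆ σ : S, ⨆ τ' : T, ⨆ _ : d τ' (τ σ) ≤ δ,
        ENNReal.ofReal (Real.sqrt k *
          |(Hk k σ τ' ω - H σ τ') - (Hk k σ (τ σ) ω - H σ (τ σ))|)) ≤ G ω) ∧
      ∫⁻ ω, G ω ∂P ≤ ENNReal.ofReal (φ k δ))
    (τh : ℕ → S → Λ → T)
    (hmax : ∀ k σ ω τ', Hk k σ τ' ω ≤ Hk k σ (τh k σ ω) ω)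
    (r : ℕ → ℝ) (hr : ∀ k, 0 < r k)
    (hrate : ∃ M : ℝ, ∀ k, r k ^ α * φ k (r k)⁻¹ / Real.sqrt k ≤ M) :
    (∀ σ τ', H σ τ' ≤ H σ (τ σ)) ∧
      Tendsto (fun M : ℝ =>
          limsup (fun k : ℕ =>
            P {ω | ∃ σ : S, r k * d (τh k σ ω) (τ σ) > M}) atTop)
        atTop (nhds 0) := by
  refine ⟨fun σ τ' => ?_, ?_⟩
  · have h := hconc σ τ'
    have h2 : 0 ≤ C * d τ' (τ σ) ^ α := mul_nonneg hC.le (Real.rpow_nonneg (hd _ _) _)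
    linarith
  obtain ⟨B, hB⟩ := hrate
  set f : ℕ → ℝ≥0∞ := fun n =>
    ENNReal.ofReal ((B * 2 ^ β / C) * ((2:ℝ) ^ (β - α)) ^ n) with hf
  have hq : (2:ℝ) ^ (β - α) < 1 :=
    Real.rpow_lt_one_of_one_lt_of_neg (by norm_num) (by linarith)
  have hsum : ∑' n, f n ≠ ∞ :=
    ((summable_geometric_of_lt_one (by positivity) hq).mul_left _).tsum_ofReal_ne_top
  have htail := ENNReal.tendsto_sum_nat_add f hsum
  rw [ENNReal.tendsto_nhds_zero] at htail ⊢
  intro ε hε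
  obtain ⟨N, hN⟩ := (htail ε hε).exists
  filter_upwards [eventually_ge_atTop ((2:ℝ) ^ N)] with M hM
  refine limsup_le_of_le (by isBoundedDefault) ?_
  filter_upwards [eventually_ge_atTop 1] with k hk
  refine le_trans ?_ hN
  have hs : 0 < Real.sqrt k := Real.sqrt_pos.2 (by exact_mod_cast hk)
  have hb := shell_bound_aux P d (Hk k) H C α hC hα τ hconc (φ k) β (hφ_mono k) (Real.sqrt k) hs
    (hmod k) (τh k) (hmax k) (r k) (hr k) B (hB k)
  refine le_trans (measure_mono ?_) ((measure_iUnion_le _).trans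
    (ENNReal.tsum_le_tsum fun n => hb (n + N)))
  rintro ω ⟨σ, hσ⟩
  have h1 : (2:ℝ) ^ N < r k * d (τh k σ ω) (τ σ) := lt_of_le_of_lt hM hσ
  obtain ⟨n, hn1, hn2⟩ := exists_nat_pow_near
    ((one_le_pow₀ (by norm_num : (1:ℝ) ≤ 2)).trans h1.le) (by norm_num : (1:ℝ) < 2)
  have hNn : N < n + 1 := (pow_lt_pow_iff_right₀ (by norm_num : (1:ℝ) < 2)).1 (h1.trans hn2)
  refine Set.mem_iUnion.2 ⟨n - N, σ, ?_⟩
  rw [Nat.sub_add_cancel (by omega)]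
  exact ⟨hn1, hn2.le⟩
end

section
/- Let Θ be a non-empty compact subset of ℝ^m, (V,𝒱,μ) a probability space, Ω a non-empty bounded open interval in ℝ, and ρ : V × Θ → Ω measurable in its first argument. Assume there are a constant 0 < γ ≤ 1 and a measurable function R : V → (0,∞) such that |ρ(v,θ') − ρ(v,θ)| ≤ R(v)‖θ' − θ‖^γ for all v ∈ V and all θ, θ' ∈ Θ. Let 𝓕 be a non-empty class of functions f : Ω → ℝ such that: (i) 𝓕 is uniformly bounded in the sup-norm; (ii) there are constants 0 < β ≤ 1 and 0 < L < ∞ such that |f(x) − f(y)| ≤ L|x−y|^β for all f ∈ 𝓕 and all x,y ∈ Ω; (iii) ∫_V R^{2β} dμ < ∞; and (iv) there are constants 0 < C < ∞ and s > 1/2 such that for every ε > 0 the class 𝓕 can be covered by at most exp(C ε^{−1/s}) closed sup-norm balls of radius ε with centers belonging to 𝓕. Then there is a constant 0 < C' < ∞ such that for all ε > 0 the class 𝓕* = { f(ρ(·,θ)) : θ ∈ Θ, f ∈ 𝓕 } of functions on V satisfies H_[](ε, 𝓕*, ‖·‖_{2,μ}) ≤ C' ε^{−1/s}. -/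
open MeasureTheory
open scoped ENNReal

namespace Stmt4

variable {Λ : Type*} [MeasurableSpace Λ]

/-- `l, u : Fin n → Λ → ℝ` form a cover of the class `G` by `n` brackets of
`L²(ν)`-bracketing size at most `ε`. -/
def IsBracketCover (ν : Measure Λ) (ε : ℝ) (G : Set (Λ → ℝ)) (n : ℕ)
    (l u : Fin n → Λ → ℝ) : Prop :=
  (∀ i, Measurable (l i)) ∧ (∀ i, Measurable (u i)) ∧ (∀ i x, l i x ≤ u i x) ∧
    (∀ i, ∫⁻ x, ENNReal.ofReal ((u i x - l i x) ^ 2) ∂ν ≤ ENNReal.ofReal (ε ^ 2)) ∧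
    ∀ f ∈ G, ∃ i, ∀ x, l i x ≤ f x ∧ f x ≤ u i x

/-- The `L²(ν)`-bracketing metric entropy `H_[](ε, G, ‖·‖_{2,ν})`: the infimum of `log n`
over all `n` such that `G` can be covered by `n` brackets of `L²(ν)`-size `≤ ε` (equal to
`⊤` if no finite bracket cover exists). -/
noncomputable def bracketingEntropy (ν : Measure Λ) (ε : ℝ) (G : Set (Λ → ℝ)) : ℝ≥0∞ :=
  sInf {c : ℝ≥0∞ | ∃ (n : ℕ) (l u : Fin n → Λ → ℝ), IsBracketCover ν ε G n l u ∧
    c = ENNReal.ofReal (Real.log n)}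

end Stmt4

lemma Stmt4.entropy_le {Λ : Type*} [MeasurableSpace Λ] {ν : Measure Λ} {ε : ℝ}
    {G : Set (Λ → ℝ)} (n : ℕ) (l u : Fin n → Λ → ℝ) (h : Stmt4.IsBracketCover ν ε G n l u) :
    Stmt4.bracketingEntropy ν ε G ≤ ENNReal.ofReal (Real.log n) :=
  sInf_le ⟨n, l, u, h, rfl⟩

lemma Stmt4.grid {m : ℕ} (Θ : Set (EuclideanSpace ℝ (Fin m))) (hΘc : IsCompact Θ)
    (hΘne : Θ.Nonempty) : ∃ A : ℝ, 0 < A ∧ ∀ δ : ℝ, 0 < δ → ∃ (k : ℕ) (t : Fin k → Θ),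
      (k : ℝ) ≤ (3 + A / δ) ^ m ∧ ∀ θ : Θ, ∃ j,
        ‖(θ : EuclideanSpace ℝ (Fin m)) - (t j : EuclideanSpace ℝ (Fin m))‖ ≤ δ := by
  obtain ⟨B, hB0, hB⟩ := hΘc.isBounded.exists_pos_norm_le
  have : Nonempty Θ := hΘne.to_subtype
  refine ⟨2 * B * (m + 1), by positivity, fun δ hδ => ?_⟩
  have hm : (0 : ℝ) < m + 1 := by positivity
  set h : ℝ := δ / (m + 1) with hh
  have hh0 : 0 < h := by positivity
  set K : ℕ := ⌈B / h⌉₊ with hK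
  have hKB : B / h ≤ K := Nat.le_ceil _
  have hmem : ∀ (θ : Θ) (i : Fin m), ⌊(θ : EuclideanSpace ℝ (Fin m)) i / h⌋ ∈
      Finset.Icc (-(K : ℤ)) K := by
    intro θ i
    have h1 : |(θ : EuclideanSpace ℝ (Fin m)) i| ≤ B := by
      have := PiLp.norm_apply_le (θ : EuclideanSpace ℝ (Fin m)) i
      rw [Real.norm_eq_abs] at this
      exact this.trans (hB _ θ.2)
    have h2 := abs_le.1 h1
    have h3 : (θ : EuclideanSpace ℝ (Fin m)) i / h ≤ K :=
      (div_le_div_of_nonneg_right h2.2 hh0.le).trans hKB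
    have h4 : -(K : ℝ) ≤ (θ : EuclideanSpace ℝ (Fin m)) i / h := by
      have := div_le_div_of_nonneg_right h2.1 hh0.le
      rw [neg_div] at this
      linarith
    rw [Finset.mem_Icc]
    constructor
    · rw [Int.le_floor]; push_cast; exact h4
    · have := (Int.floor_le ((θ : EuclideanSpace ℝ (Fin m)) i / h)).trans h3
      have h' : ((⌊(θ : EuclideanSpace ℝ (Fin m)) i / h⌋ : ℤ) : ℝ) ≤ ((K : ℤ) : ℝ) := by
        rw [Int.cast_natCast]; exact this
      exact Int.cast_le.1 h'
  let q : Θ → (Fin m → Finset.Icc (-(K : ℤ)) K) := fun θ i => ⟨_, hmem θ i⟩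
  let e := Fintype.equivFin (Fin m → Finset.Icc (-(K : ℤ)) K)
  refine ⟨_, fun j => Function.invFun q (e.symm j), ?_, fun θ => ⟨e (q θ), ?_⟩⟩
  · have hc : Fintype.card (Fin m → Finset.Icc (-(K : ℤ)) K) = (2 * K + 1) ^ m := by
      rw [Fintype.card_fun, Fintype.card_fin, Fintype.card_coe, Int.card_Icc]
      congr 1
      omega
    rw [hc]
    push_cast
    have h5 : (K : ℝ) < B / h + 1 := Nat.ceil_lt_add_one (by positivity)
    have h6 : B / h = B * (m + 1) / δ := by rw [hh]; field_simp
    apply pow_le_pow_left₀ (by positivity)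
    have : 2 * B * (m + 1) / δ = 2 * (B * (m + 1) / δ) := by ring
    rw [this, ← h6]
    linarith
  · simp only [Equiv.symm_apply_apply]
    have hq : q (Function.invFun q (q θ)) = q θ := Function.invFun_eq ⟨θ, rfl⟩
    set θ' := Function.invFun q (q θ)
    have h7 : ∀ i, |(θ : EuclideanSpace ℝ (Fin m)) i - (θ' : EuclideanSpace ℝ (Fin m)) i| ≤ h := by
      intro i
      have h8 : ⌊(θ : EuclideanSpace ℝ (Fin m)) i / h⌋ = ⌊(θ' : EuclideanSpace ℝ (Fin m)) i / h⌋ :=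
        (congrArg Subtype.val (congrFun hq i)).symm
      have h9 := (Int.abs_sub_lt_one_of_floor_eq_floor h8).le
      rw [← sub_div, abs_div, abs_of_pos hh0, div_le_one hh0] at h9
      exact h9
    rw [EuclideanSpace.norm_eq]
    apply Real.sqrt_le_iff.2 ⟨hδ.le, ?_⟩
    have h10 : ∑ i, ‖((θ : EuclideanSpace ℝ (Fin m)) - (θ' : EuclideanSpace ℝ (Fin m))) i‖ ^ 2
        ≤ ∑ i : Fin m, h ^ 2 := by
      apply Finset.sum_le_sum
      intro i _
      apply pow_le_pow_left₀ (norm_nonneg _)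
      exact h7 i
    refine h10.trans ?_
    simp only [Finset.sum_const, Finset.card_univ, Fintype.card_fin, nsmul_eq_mul]
    have h11 : δ = h * (m + 1) := by rw [hh]; field_simp
    rw [h11, mul_pow]
    have h12 : (m : ℝ) ≤ (m + 1) ^ 2 := by nlinarith [(Nat.cast_nonneg m : (0:ℝ) ≤ m)]
    nlinarith [sq_nonneg h]

/-- bracketing entropy bound for the simulated class `F*`.
Let `Θ ⊆ ℝ^m` be non-empty compact, `(V,𝒱,μ)` a probability space, `Ω = (a,b)` a non-empty
bounded open interval, and `ρ : V × Θ → Ω` measurable in `v` and Hölder in `θ`: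
`|ρ(v,θ') − ρ(v,θ)| ≤ R(v)‖θ'−θ‖^γ` with `R > 0` measurable.  Let `F` be a non-empty class
of functions on `Ω` that is (i) uniformly sup-norm bounded, (ii) uniformly `β`-Hölder with
constant `L`, with (iii) `∫ R^{2β} dμ < ∞`, and (iv) for all `ε > 0` coverable by at most
`exp(C ε^{−1/s})` sup-norm balls of radius `ε` centered in `F`, where `s > 1/2`.  Then there
is `0 < C' < ∞` with `H_[](ε, F*, ‖·‖_{2,μ}) ≤ C' ε^{−1/s}` for all `ε > 0`, where
`F* = {f(ρ(·,θ)) : θ ∈ Θ, f ∈ F}`. -/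
theorem stmt4_bracketing_entropy_of_Fstar
    {m : ℕ} (a b : ℝ) (hab : a < b)
    (Θ : Set (EuclideanSpace ℝ (Fin m))) (hΘc : IsCompact Θ) (hΘne : Θ.Nonempty)
    {V : Type*} [MeasurableSpace V] (μ : Measure V) [IsProbabilityMeasure μ]
    (ρ : V → Θ → Set.Ioo a b)
    (hρ_meas : ∀ θ : Θ, Measurable fun v => ρ v θ)
    (γ : ℝ) (hγ0 : 0 < γ) (hγ1 : γ ≤ 1)
    (R : V → ℝ) (hR_meas : Measurable R) (hR_pos : ∀ v, 0 < R v)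
    (hρ_hoelder : ∀ v, ∀ θ θ' : Θ,
      |((ρ v θ' : ℝ)) - ((ρ v θ : ℝ))| ≤
        R v * ‖(θ' : EuclideanSpace ℝ (Fin m)) - (θ : EuclideanSpace ℝ (Fin m))‖ ^ γ)
    (F : Set (Set.Ioo a b → ℝ)) (hFne : F.Nonempty)
    (M : ℝ) (hF_bdd : ∀ f ∈ F, ∀ x, |f x| ≤ M)
    (β L : ℝ) (hβ0 : 0 < β) (hβ1 : β ≤ 1) (hL : 0 < L)
    (hF_hoelder : ∀ f ∈ F, ∀ x y : Set.Ioo a b,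
      |f x - f y| ≤ L * |(x : ℝ) - (y : ℝ)| ^ β)
    (hR_int : ∫⁻ v, ENNReal.ofReal (R v ^ (2 * β)) ∂μ < ⊤)
    (C s : ℝ) (hC : 0 < C) (hs : 1 / 2 < s)
    (hF_cover : ∀ ε : ℝ, 0 < ε → ∃ (n : ℕ) (c : Fin n → Set.Ioo a b → ℝ),
      (n : ℝ) ≤ Real.exp (C * ε ^ (-(1 : ℝ) / s)) ∧ (∀ i, c i ∈ F) ∧
        ∀ f ∈ F, ∃ i, ∀ x, |f x - c i x| ≤ ε) :
    ∃ C' : ℝ, 0 < C' ∧ ∀ ε : ℝ, 0 < ε →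
      Stmt4.bracketingEntropy μ ε
          {g : V → ℝ | ∃ θ : Θ, ∃ f ∈ F, g = fun v => f (ρ v θ)} ≤
        ENNReal.ofReal (C' * ε ^ (-(1 : ℝ) / s)) := by
  have : Nonempty Θ := hΘne.to_subtype
  have hM : 0 ≤ M := by
    obtain ⟨f, hf⟩ := hFne
    have := hF_bdd f hf ⟨(a + b) / 2, by constructor <;> linarith⟩
    exact (abs_nonneg _).trans this
  have hs0 : 0 < s := by linarith
  obtain ⟨A, hA, hgrid⟩ := Stmt4.grid Θ hΘc hΘne
  set I : ℝ := (∫⁻ v, ENNReal.ofReal (R v ^ (2 * β)) ∂μ).toReal with hI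
  have hI0 : 0 ≤ I := ENNReal.toReal_nonneg
  set J : ℝ := I + 1 with hJ
  have hJ0 : 0 < J := by positivity
  have hβγ : 0 < β * γ := by positivity
  set Q : ℝ := 4 * L * J with hQ
  have hQ0 : 0 < Q := by positivity
  set ε0 : ℝ := 2 * M + 1 with hε0
  have hε00 : 0 < ε0 := by positivity
  set δ0 : ℝ := (ε0 / Q) ^ (1 / (β * γ)) with hδ0
  have hδ00 : 0 < δ0 := by positivity
  set τ : ℝ := β * γ / s with hτ
  have hτ0 : 0 < τ := by positivity
  set C1 : ℝ := C * 4 ^ (1 / s) with hC1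
  set C2 : ℝ := m * ((3 * δ0 + A) ^ τ * Q ^ (1 / s) / τ) with hC2
  have hC10 : 0 < C1 := by positivity
  have hC20 : 0 ≤ C2 := by positivity
  refine ⟨C1 + C2, by positivity, fun ε hε => ?_⟩
  by_cases hεε : ε0 ≤ ε
  · -- one bracket
    refine (Stmt4.entropy_le 1 (fun _ _ => -M) (fun _ _ => M) ⟨?_, ?_, ?_, ?_, ?_⟩).trans ?_
    · intro i; exact measurable_const
    · intro i; exact measurable_const
    · intro i x; linarith
    · intro i
      rw [lintegral_const, measure_univ, mul_one]
      apply ENNReal.ofReal_le_ofReal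
      apply pow_le_pow_left₀ <;> linarith
    · rintro g ⟨θ, f, hf, rfl⟩
      exact ⟨0, fun x => abs_le.1 (hF_bdd f hf _)⟩
    · simp
  push Not at hεε
  set D : ℝ := ε / Q with hD
  have hD0 : 0 < D := by positivity
  set δ : ℝ := D ^ (1 / (β * γ)) with hδ
  have hδpos : 0 < δ := by positivity
  have hδle : δ ≤ δ0 := by
    apply Real.rpow_le_rpow hD0.le _ (by positivity)
    exact div_le_div_of_nonneg_right hεε.le hQ0.le
  have hδD : δ ^ (β * γ) = D := by
    rw [hδ, ← Real.rpow_mul hD0.le, one_div_mul_cancel hβγ.ne', Real.rpow_one]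
  obtain ⟨n, c, hn, hcF, hc⟩ := hF_cover (ε / 4) (by positivity)
  obtain ⟨k, t, hk, ht⟩ := hgrid δ hδpos
  let e : Fin (n * k) ≃ Fin n × Fin k := finProdFinEquiv.symm
  let w : V → ℝ := fun v => ε / 4 + L * (R v ^ β * D)
  have hwm : Measurable w := by
    have : Measurable fun v => R v ^ β := hR_meas.pow_const β
    exact measurable_const.add ((this.mul_const D).const_mul L)
  have hw0 : ∀ v, 0 ≤ w v := fun v => by
    have := (hR_pos v).le
    positivity
  have hcm : ∀ i j, Measurable fun v => c i (ρ v (t j)) := by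
    intro i j
    have hcont : Continuous (c i) := by
      have hh : HolderWith L.toNNReal β.toNNReal (c i) := by
        intro x y
        have h1 := hF_hoelder (c i) (hcF i) x y
        rw [edist_dist, edist_dist, Real.dist_eq, Subtype.dist_eq, Real.dist_eq,
          Real.coe_toNNReal β hβ0.le, ENNReal.ofReal_rpow_of_nonneg (abs_nonneg _) hβ0.le]
        change _ ≤ ENNReal.ofReal L * _
        rw [← ENNReal.ofReal_mul hL.le]
        exact ENNReal.ofReal_le_ofReal h1
      exact hh.continuous (by simpa using hβ0)
    exact hcont.measurable.comp (hρ_meas (t j))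
  refine (Stmt4.entropy_le (n * k) (fun p v => c (e p).1 (ρ v (t (e p).2)) - w v)
    (fun p v => c (e p).1 (ρ v (t (e p).2)) + w v) ⟨?_, ?_, ?_, ?_, ?_⟩).trans ?_
  · exact fun p => (hcm _ _).sub hwm
  · exact fun p => (hcm _ _).add hwm
  · intro p v
    have := hw0 v
    linarith
  · intro p
    have h1 : ∀ v, ENNReal.ofReal ((c (e p).1 (ρ v (t (e p).2)) + w v -
        (c (e p).1 (ρ v (t (e p).2)) - w v)) ^ 2) ≤
        ENNReal.ofReal (ε ^ 2 / 2) +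
          ENNReal.ofReal (8 * L ^ 2 * D ^ 2) * ENNReal.ofReal (R v ^ (2 * β)) := by
      intro v
      have hR2 : R v ^ (2 * β) = (R v ^ β) ^ 2 := by
        rw [mul_comm, Real.rpow_mul (hR_pos v).le, Real.rpow_two]
      rw [← ENNReal.ofReal_mul (by positivity), ← ENNReal.ofReal_add (by positivity)
        (mul_nonneg (by positivity) (Real.rpow_nonneg (hR_pos v).le _)), hR2]
      apply ENNReal.ofReal_le_ofReal
      simp only [w]
      nlinarith [sq_nonneg (ε / 4 - L * (R v ^ β * D))]
    refine (lintegral_mono h1).trans ?_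
    rw [lintegral_add_left measurable_const, lintegral_const, measure_univ, mul_one,
      lintegral_const_mul' _ _ ENNReal.ofReal_ne_top, ← ENNReal.ofReal_toReal hR_int.ne,
      ← hI, ← ENNReal.ofReal_mul (by positivity), ← ENNReal.ofReal_add (by positivity)
        (by positivity)]
    apply ENNReal.ofReal_le_ofReal
    have h2 : ε = 4 * L * J * D := by rw [hD, hQ]; field_simp
    have h3 : I ≤ J ^ 2 := by rw [hJ]; nlinarith
    have h4 : 8 * L ^ 2 * D ^ 2 * I ≤ 8 * L ^ 2 * D ^ 2 * J ^ 2 := by gcongr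
    have h5 : ε ^ 2 = 16 * L ^ 2 * D ^ 2 * J ^ 2 := by rw [h2]; ring
    linarith
  · rintro g ⟨θ, f, hf, rfl⟩
    obtain ⟨i, hi⟩ := hc f hf
    obtain ⟨j, hj⟩ := ht θ
    refine ⟨e.symm (i, j), fun v => ?_⟩
    simp only [Equiv.apply_symm_apply]
    have h1 := abs_le.1 (hi (ρ v θ))
    have h2 := hF_hoelder (c i) (hcF i) (ρ v θ) (ρ v (t j))
    have h3 := hρ_hoelder v (t j) θ
    have h4 : L * |(ρ v θ : ℝ) - (ρ v (t j) : ℝ)| ^ β ≤ L * (R v ^ β * D) := by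
      apply mul_le_mul_of_nonneg_left _ hL.le
      have h5 : |(ρ v θ : ℝ) - (ρ v (t j) : ℝ)| ≤ R v * δ ^ γ :=
        h3.trans (mul_le_mul_of_nonneg_left
          (Real.rpow_le_rpow (norm_nonneg _) hj hγ0.le) (hR_pos v).le)
      refine (Real.rpow_le_rpow (abs_nonneg _) h5 hβ0.le).trans ?_
      rw [Real.mul_rpow (hR_pos v).le (by positivity), ← Real.rpow_mul hδpos.le,
        mul_comm γ β, hδD]
    have h6 := abs_le.1 (h2.trans h4)
    simp only [w]
    constructor <;> linarith [h1.1, h1.2, h6.1, h6.2]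
  · apply ENNReal.ofReal_le_ofReal
    have hnpos : 0 < n := by
      obtain ⟨f, hf⟩ := hFne
      exact Fin.pos (hc f hf).choose
    have hkpos : 0 < k := Fin.pos (ht (Classical.arbitrary Θ)).choose
    have hn' : (0 : ℝ) < n := by exact_mod_cast hnpos
    have hk' : (0 : ℝ) < k := by exact_mod_cast hkpos
    push_cast
    rw [Real.log_mul hn'.ne' hk'.ne', add_mul]
    apply add_le_add
    · have h1 := Real.log_le_log hn' hn
      rw [Real.log_exp] at h1
      refine h1.trans_eq ?_
      rw [Real.div_rpow hε.le (by norm_num), hC1, neg_div, Real.rpow_neg (by norm_num : (0:ℝ) ≤ 4)]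
      field_simp
    · have h1 := Real.log_le_log hk' hk
      rw [Real.log_pow] at h1
      refine h1.trans ?_
      have h2 : 0 ≤ 3 + A / δ := by positivity
      rw [hC2, mul_assoc]
      apply mul_le_mul_of_nonneg_left _ (Nat.cast_nonneg m)
      refine (Real.log_le_rpow_div h2 hτ0).trans ?_
      rw [div_mul_eq_mul_div]
      apply div_le_div_of_nonneg_right _ hτ0.le
      have h3 : 3 + A / δ ≤ (3 * δ0 + A) / δ := by
        rw [le_div_iff₀ hδpos, add_mul, div_mul_cancel₀ _ hδpos.ne']
        linarith
      refine (Real.rpow_le_rpow h2 h3 hτ0.le).trans_eq ?_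
      have h4 : δ ^ τ = D ^ (1 / s) := by
        rw [hτ, ← mul_one_div, Real.rpow_mul hδpos.le, hδD]
      rw [Real.div_rpow (by positivity) hδpos.le, h4, hD, Real.div_rpow hε.le hQ0.le, neg_div,
        Real.rpow_neg hε.le]
      field_simp
end

section
/- Let Θ be a non-empty compact subset of ℝ^m, (V,𝒱,μ) a probability space, Ω a non-empty bounded open interval in ℝ, and ρ : V × Θ → Ω measurable in its first argument. Assume there are a constant 0 < γ ≤ 1 and a measurable function R : V → (0,∞) such that |ρ(v,θ') − ρ(v,θ)| ≤ R(v)‖θ' − θ‖^γ for all v ∈ V and all θ, θ' ∈ Θ. Let 𝓕 be a non-empty class of functions f : Ω → ℝ such that: (i) 𝓕 is uniformly bounded in the sup-norm; (ii) there are constants 0 < β ≤ 1 and 0 < L < ∞ such that |f(x) − f(y)| ≤ L|x−y|^β for all f ∈ 𝓕 and all x,y ∈ Ω; (iii) ∫_V R^{2β} dμ < ∞; (iv) there are constants 0 < C < ∞ and s > 1/2 such that for every ε > 0 the class 𝓕 can be covered by at most exp(C ε^{−1/s}) closed sup-norm balls of radius ε with centers belonging to 𝓕; and (v) there is a constant χ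 > 0 with f(x) ≥ χ for all f ∈ 𝓕 and all x ∈ Ω. Then there is a constant 0 < C'' < ∞ such that for all ε > 0 the class log 𝓕* = { log f(ρ(·,θ)) : θ ∈ Θ, f ∈ 𝓕 } of functions on V satisfies H_[](ε, log 𝓕*, ‖·‖_{2,μ}) ≤ C'' ε^{−1/s}. -/
open MeasureTheory
open scoped ENNReal

namespace Stmt5

variable {Λ : Type*} [MeasurableSpace Λ]

/-- `l, u : Fin n → Λ → ℝ` form a cover of the class `G` by `n` brackets of
`L²(ν)`-bracketing size at most `ε`. -/
def IsBracketCover (ν : Measure Λ) (ε : ℝ) (G : Set (Λ → ℝ)) (n : ℕ)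
    (l u : Fin n → Λ → ℝ) : Prop :=
  (∀ i, Measurable (l i)) ∧ (∀ i, Measurable (u i)) ∧ (∀ i x, l i x ≤ u i x) ∧
    (∀ i, ∫⁻ x, ENNReal.ofReal ((u i x - l i x) ^ 2) ∂ν ≤ ENNReal.ofReal (ε ^ 2)) ∧
    ∀ f ∈ G, ∃ i, ∀ x, l i x ≤ f x ∧ f x ≤ u i x

/-- The `L²(ν)`-bracketing metric entropy `H_[](ε, G, ‖·‖_{2,ν})`: the infimum of `log n`
over all `n` such that `G` can be covered by `n` brackets of `L²(ν)`-size `≤ ε` (equal to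
`⊤` if no finite bracket cover exists). -/
noncomputable def bracketingEntropy (ν : Measure Λ) (ε : ℝ) (G : Set (Λ → ℝ)) : ℝ≥0∞ :=
  sInf {c : ℝ≥0∞ | ∃ (n : ℕ) (l u : Fin n → Λ → ℝ), IsBracketCover ν ε G n l u ∧
    c = ENNReal.ofReal (Real.log n)}

end Stmt5

theorem aux_cover {m : ℕ} (Θ : Set (EuclideanSpace ℝ (Fin m))) (hΘc : IsCompact Θ) :
    ∃ A : ℝ, 0 < A ∧ ∀ η : ℝ, 0 < η → ∃ (n : ℕ) (t : Fin n → Θ),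
      (n : ℝ) ≤ (A * (1 + 1 / η)) ^ m ∧
      ∀ θ : Θ, ∃ j, ‖(θ : EuclideanSpace ℝ (Fin m)) - (t j : EuclideanSpace ℝ (Fin m))‖ ≤ η := by
  classical
  obtain ⟨r, hr⟩ := hΘc.isBounded.exists_norm_le
  set r' : ℝ := max r 0 with hr'
  have hr0 : 0 ≤ r' := le_max_right _ _
  have hrb : ∀ x ∈ Θ, ‖x‖ ≤ r' := fun x hx => (hr x hx).trans (le_max_left _ _)
  refine ⟨2 * r' * (m + 1) + 3, by positivity, fun η hη => ?_⟩
  set h : ℝ := η / (m + 1) with hh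
  have hm : (0 : ℝ) < m + 1 := by positivity
  have hpos : 0 < h := by positivity
  set K : ℕ := ⌈r' / h⌉₊ with hK
  let φ : Θ → (Fin m → ℤ) := fun x i => ⌊(x : EuclideanSpace ℝ (Fin m)) i / h⌋
  let P : Finset (Fin m → ℤ) := Fintype.piFinset (fun _ => Finset.Icc (-(K : ℤ)) K)
  have hφ : Set.range φ ⊆ (P : Set (Fin m → ℤ)) := by
    rintro _ ⟨x, rfl⟩
    simp only [P, Finset.mem_coe, Fintype.mem_piFinset, Finset.mem_Icc, φ]
    intro i
    have h1 : |(x : EuclideanSpace ℝ (Fin m)) i| ≤ r' :=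
      (PiLp.norm_apply_le (x : EuclideanSpace ℝ (Fin m)) i).trans (hrb x x.2)
    have h2 := abs_le.1 h1
    have hKr : r' / h ≤ K := Nat.le_ceil _
    have h3 : (x : EuclideanSpace ℝ (Fin m)) i / h ≤ r' / h := by gcongr; exact h2.2
    have h4 : -(r' / h) ≤ (x : EuclideanSpace ℝ (Fin m)) i / h := by
      rw [← neg_div]; gcongr; exact h2.1
    constructor
    · rw [Int.le_floor]; push_cast; linarith
    · have : (⌊(x : EuclideanSpace ℝ (Fin m)) i / h⌋ : ℝ) ≤ K :=
        (Int.floor_le _).trans (h3.trans hKr)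
      exact_mod_cast this
  have hfin : (Set.range φ).Finite := P.finite_toSet.subset hφ
  have : Fintype (Set.range φ) := hfin.fintype
  have hcard : Fintype.card (Set.range φ) ≤ P.card := by
    rw [← Set.toFinset_card]
    apply Finset.card_le_card
    intro y hy
    exact hφ (by simpa using hy)
  have hP : (P.card : ℝ) = (2 * K + 1 : ℝ) ^ m := by
    have h5 : ((K : ℤ) + 1 - -(K : ℤ)).toNat = 2 * K + 1 := by omega
    simp only [P, Fintype.card_piFinset, Int.card_Icc, h5, Finset.prod_const, Finset.card_univ,
      Fintype.card_fin]
    push_cast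
    ring
  let e := Fintype.equivFin (Set.range φ)
  refine ⟨Fintype.card (Set.range φ), fun j => Set.rangeSplitting φ (e.symm j), ?_, ?_⟩
  · have h6 : (Fintype.card (Set.range φ) : ℝ) ≤ (2 * K + 1 : ℝ) ^ m := by
      rw [← hP]; exact_mod_cast hcard
    refine h6.trans ?_
    gcongr
    have h7 : (K : ℝ) ≤ r' / h + 1 := (Nat.ceil_lt_add_one (by positivity)).le
    have h8 : r' / h = r' * (m + 1) * (1 / η) := by rw [hh]; field_simp
    have h9 : 0 ≤ 1 / η := by positivity
    have h10 : 0 ≤ r' * (m + 1) := by positivity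
    rw [h8] at h7
    nlinarith
  · intro θ
    refine ⟨e ⟨φ θ, Set.mem_range_self θ⟩, ?_⟩
    simp only [Equiv.symm_apply_apply]
    have hθ := Set.apply_rangeSplitting φ ⟨φ θ, Set.mem_range_self θ⟩
    generalize Set.rangeSplitting φ ⟨φ θ, Set.mem_range_self θ⟩ = θ' at hθ ⊢
    change φ θ' = φ θ at hθ
    have hc : ∀ i, |(θ : EuclideanSpace ℝ (Fin m)) i - (θ' : EuclideanSpace ℝ (Fin m)) i| ≤ h := by
      intro i
      have h1 := Int.abs_sub_lt_one_of_floor_eq_floor (congrFun hθ i).symm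
      rw [← sub_div, abs_div, abs_of_pos hpos, div_lt_one hpos] at h1
      exact h1.le
    rw [EuclideanSpace.norm_eq]
    apply Real.sqrt_le_iff.2 ⟨hη.le, ?_⟩
    have h11 : ∑ i : Fin m, ‖((θ : EuclideanSpace ℝ (Fin m)) - (θ' : EuclideanSpace ℝ (Fin m))) i‖ ^ 2
        ≤ ∑ i : Fin m, h ^ 2 := by
      apply Finset.sum_le_sum
      intro i _
      have := hc i
      rw [Real.norm_eq_abs]
      gcongr
      exact this
    refine h11.trans ?_
    have h12 : η = h * (m + 1) := by rw [hh]; field_simp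
    rw [h12]
    simp only [Finset.sum_const, Finset.card_univ, Fintype.card_fin, nsmul_eq_mul]
    have hm0 : (0 : ℝ) ≤ m := by positivity
    nlinarith [sq_nonneg h, mul_nonneg hm0 (sq_nonneg h), mul_nonneg (mul_nonneg hm0 hm0) (sq_nonneg h)]

theorem aux_entropy {V : Type*} [MeasurableSpace V] {μ : Measure V} {ε : ℝ} {G : Set (V → ℝ)}
    (n : ℕ) (l u : Fin n → V → ℝ) (h : Stmt5.IsBracketCover μ ε G n l u) :
    Stmt5.bracketingEntropy μ ε G ≤ ENNReal.ofReal (Real.log n) :=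
  sInf_le ⟨n, l, u, h, rfl⟩

theorem aux_log {χ x y : ℝ} (hχ : 0 < χ) (hx : χ ≤ x) (hy : χ ≤ y) :
    |Real.log x - Real.log y| ≤ |x - y| / χ := by
  have key : ∀ x y : ℝ, χ ≤ x → χ ≤ y → Real.log x - Real.log y ≤ |x - y| / χ := by
    intro x y hx hy
    have hx0 : 0 < x := hχ.trans_le hx
    have hy0 : 0 < y := hχ.trans_le hy
    rw [← Real.log_div hx0.ne' hy0.ne']
    have h1 := Real.log_le_sub_one_of_pos (div_pos hx0 hy0)
    have h2 : x / y - 1 = (x - y) / y := by field_simp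
    rw [h2] at h1
    refine h1.trans ?_
    calc (x - y) / y ≤ |x - y| / y := by gcongr; exact le_abs_self _
      _ ≤ |x - y| / χ := by gcongr
  rw [abs_le]
  constructor
  · have := key y x hy hx
    rw [abs_sub_comm] at this
    linarith
  · exact key x y hx hy

theorem aux_integral {V : Type*} [MeasurableSpace V] (μ : Measure V) [IsProbabilityMeasure μ]
    (R : V → ℝ) (hR_meas : Measurable R) (hR_pos : ∀ v, 0 < R v) (β : ℝ)
    (hR_int : ∫⁻ v, ENNReal.ofReal (R v ^ (2 * β)) ∂μ < ⊤) (p q ε : ℝ)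
    (hpq : 8 * p ^ 2 + 8 * q ^ 2 * (∫⁻ v, ENNReal.ofReal (R v ^ (2 * β)) ∂μ).toReal ≤ ε ^ 2) :
    ∫⁻ v, ENNReal.ofReal ((2 * (p + q * R v ^ β)) ^ 2) ∂μ ≤ ENNReal.ofReal (ε ^ 2) := by
  set I := ∫⁻ v, ENNReal.ofReal (R v ^ (2 * β)) ∂μ with hI
  calc ∫⁻ v, ENNReal.ofReal ((2 * (p + q * R v ^ β)) ^ 2) ∂μ
      ≤ ∫⁻ v, (ENNReal.ofReal (8 * p ^ 2)
          + ENNReal.ofReal (8 * q ^ 2) * ENNReal.ofReal (R v ^ (2 * β))) ∂μ := by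
        apply lintegral_mono
        intro v
        have h1 : R v ^ (2 * β) = (R v ^ β) ^ 2 := by
          rw [mul_comm, Real.rpow_mul (hR_pos v).le]; norm_cast
        simp only
        rw [← ENNReal.ofReal_mul (by positivity), ← ENNReal.ofReal_add (by positivity)
          (by rw [h1]; positivity), h1]
        apply ENNReal.ofReal_le_ofReal
        nlinarith [sq_nonneg (p - q * R v ^ β)]
    _ = ENNReal.ofReal (8 * p ^ 2) + ENNReal.ofReal (8 * q ^ 2) * I := by
        rw [lintegral_add_left measurable_const, lintegral_const, measure_univ, mul_one,
          lintegral_const_mul _ (by fun_prop)]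
    _ = ENNReal.ofReal (8 * p ^ 2 + 8 * q ^ 2 * I.toReal) := by
        rw [ENNReal.ofReal_add (by positivity) (by positivity),
          ENNReal.ofReal_mul (p := 8 * q ^ 2) (by positivity), ENNReal.ofReal_toReal hR_int.ne]
    _ ≤ _ := ENNReal.ofReal_le_ofReal hpq

/-- bracketing entropy bound for the logarithmic simulated class
`log F*`.
Let `Θ ⊆ ℝ^m` be non-empty compact, `(V,𝒱,μ)` a probability space, `Ω = (a,b)` a non-empty
bounded open interval, and `ρ : V × Θ → Ω` measurable in `v` and Hölder in `θ`:
`|ρ(v,θ') − ρ(v,θ)| ≤ R(v)‖θ'−θ‖^γ` with `R > 0` measurable.  Let `F` be a non-empty class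
of functions on `Ω` that is (i) uniformly sup-norm bounded, (ii) uniformly `β`-Hölder with
constant `L`, with (iii) `∫ R^{2β} dμ < ∞`, and (iv) for all `ε > 0` coverable by at most
`exp(C ε^{−1/s})` sup-norm balls of radius `ε` centered in `F`, where `s > 1/2`.  Then there
is `0 < C'' < ∞` with `H_[](ε, log F*, ‖·‖_{2,μ}) ≤ C'' ε^{−1/s}` for all `ε > 0`, where
`log F* = {log f(ρ(·,θ)) : θ ∈ Θ, f ∈ F}`; in addition to (i)–(iv), the members of `F` are
here assumed to be uniformly bounded below by some `χ > 0`. -/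
theorem stmt5_bracketing_entropy_of_logFstar
    {m : ℕ} (a b : ℝ) (hab : a < b)
    (Θ : Set (EuclideanSpace ℝ (Fin m))) (hΘc : IsCompact Θ) (hΘne : Θ.Nonempty)
    {V : Type*} [MeasurableSpace V] (μ : Measure V) [IsProbabilityMeasure μ]
    (ρ : V → Θ → Set.Ioo a b)
    (hρ_meas : ∀ θ : Θ, Measurable fun v => ρ v θ)
    (γ : ℝ) (hγ0 : 0 < γ) (hγ1 : γ ≤ 1)
    (R : V → ℝ) (hR_meas : Measurable R) (hR_pos : ∀ v, 0 < R v)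
    (hρ_hoelder : ∀ v, ∀ θ θ' : Θ,
      |((ρ v θ' : ℝ)) - ((ρ v θ : ℝ))| ≤
        R v * ‖(θ' : EuclideanSpace ℝ (Fin m)) - (θ : EuclideanSpace ℝ (Fin m))‖ ^ γ)
    (F : Set (Set.Ioo a b → ℝ)) (hFne : F.Nonempty)
    (M : ℝ) (hF_bdd : ∀ f ∈ F, ∀ x, |f x| ≤ M)
    (β L : ℝ) (hβ0 : 0 < β) (hβ1 : β ≤ 1) (hL : 0 < L)
    (hF_hoelder : ∀ f ∈ F, ∀ x y : Set.Ioo a b,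
      |f x - f y| ≤ L * |(x : ℝ) - (y : ℝ)| ^ β)
    (hR_int : ∫⁻ v, ENNReal.ofReal (R v ^ (2 * β)) ∂μ < ⊤)
    (C s : ℝ) (hC : 0 < C) (hs : 1 / 2 < s)
    (hF_cover : ∀ ε : ℝ, 0 < ε → ∃ (n : ℕ) (c : Fin n → Set.Ioo a b → ℝ),
      (n : ℝ) ≤ Real.exp (C * ε ^ (-(1 : ℝ) / s)) ∧ (∀ i, c i ∈ F) ∧
        ∀ f ∈ F, ∃ i, ∀ x, |f x - c i x| ≤ ε)
    (χ : ℝ) (hχ : 0 < χ) (hF_lb : ∀ f ∈ F, ∀ x, χ ≤ f x) :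
    ∃ C' : ℝ, 0 < C' ∧ ∀ ε : ℝ, 0 < ε →
      Stmt5.bracketingEntropy μ ε
          {g : V → ℝ | ∃ θ : Θ, ∃ f ∈ F, g = fun v => Real.log (f (ρ v θ))} ≤
        ENNReal.ofReal (C' * ε ^ (-(1 : ℝ) / s)) := by
  classical
  obtain ⟨A, hA, hcov⟩ := aux_cover Θ hΘc
  set I := (∫⁻ v, ENNReal.ofReal (R v ^ (2 * β)) ∂μ).toReal with hI
  have hI0 : 0 ≤ I := ENNReal.toReal_nonneg
  obtain ⟨f₀, hf₀⟩ := hFne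
  obtain ⟨θ₀, hθ₀⟩ := hΘne
  have hMχ : χ ≤ M := by
    have hx : (a + b) / 2 ∈ Set.Ioo a b := ⟨by linarith, by linarith⟩
    exact (hF_lb f₀ hf₀ ⟨_, hx⟩).trans ((le_abs_self _).trans (hF_bdd f₀ hf₀ _))
  have hM0 : 0 < M := hχ.trans_le hMχ
  have hlogMχ : Real.log χ ≤ Real.log M := Real.log_le_log hχ hMχ
  set K : ℝ := Real.log M - Real.log χ + 1 with hK
  have hK0 : 0 < K := by linarith
  have hs0 : 0 < s := by linarith
  -- constants
  set S : ℝ := Real.sqrt (I + 1) with hS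
  have hS0 : 0 < S := Real.sqrt_pos.2 (by linarith)
  have hS2 : S ^ 2 = I + 1 := Real.sq_sqrt (by linarith)
  set B : ℝ := 4 * L * S / χ with hB
  have hB0 : 0 < B := by positivity
  set p : ℝ := 1 / (γ * β) with hp
  have hp0 : 0 < p := by positivity
  set D : ℝ := A * (K ^ p + B ^ p) with hD
  have hD0 : 0 < D := by positivity
  set t : ℝ := 1 / (s * p) with ht
  have ht0 : 0 < t := by positivity
  refine ⟨C * (χ / 4) ^ (-(1 : ℝ) / s) + m * (D ^ t / t), by positivity, fun ε hε => ?_⟩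
  rcases le_or_gt K ε with hεK | hεK
  · refine (aux_entropy 1 (fun _ _ => Real.log χ) (fun _ _ => Real.log M) ⟨?_, ?_, ?_, ?_, ?_⟩).trans ?_
    · intro _; exact measurable_const
    · intro _; exact measurable_const
    · intro _ _; exact hlogMχ
    · intro _
      rw [lintegral_const, measure_univ, mul_one]
      apply ENNReal.ofReal_le_ofReal
      have : Real.log M - Real.log χ ≤ ε := by linarith
      have h0 : 0 ≤ Real.log M - Real.log χ := by linarith
      gcongr
    · rintro _ ⟨θ, f, hf, rfl⟩
      refine ⟨0, fun v => ⟨?_, ?_⟩⟩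
      · exact Real.log_le_log hχ (hF_lb f hf _)
      · exact Real.log_le_log (hχ.trans_le (hF_lb f hf _))
          ((le_abs_self _).trans (hF_bdd f hf _))
    · simp
  · obtain ⟨n₁, c, hn₁, hcF, hc⟩ := hF_cover (χ * ε / 4) (by positivity)
    set η : ℝ := (ε / B) ^ p with hη
    have hη0 : 0 < η := by positivity
    obtain ⟨n₂, τ, hn₂, hτ⟩ := hcov η hη0
    obtain ⟨i₀, -⟩ := hc f₀ hf₀
    obtain ⟨j₀, -⟩ := hτ ⟨θ₀, hθ₀⟩
    have hn₁0 : 0 < n₁ := i₀.pos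
    have hn₂0 : 0 < n₂ := j₀.pos
    let e : Fin (n₁ * n₂) ≃ Fin n₁ × Fin n₂ := finProdFinEquiv.symm
    let ctr : Fin (n₁ * n₂) → V → ℝ := fun k v => Real.log (c (e k).1 (ρ v (τ (e k).2)))
    -- half-width
    let w : V → ℝ := fun v => ε / 4 + (ε / (4 * S)) * R v ^ β
    have hw0 : ∀ v, 0 ≤ w v := by
      intro v
      have := (hR_pos v).le
      have : 0 ≤ R v ^ β := Real.rpow_nonneg this _
      positivity
    have hwm : Measurable w := by fun_prop
    have hcm : ∀ i, Measurable (c i) := by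
      intro i
      have hcont : HolderWith L.toNNReal β.toNNReal (c i) := by
        intro x y
        rw [edist_dist, edist_dist, Real.coe_toNNReal _ hβ0.le,
          ENNReal.ofReal_rpow_of_nonneg dist_nonneg hβ0.le]
        change _ ≤ ENNReal.ofReal L * _
        rw [← ENNReal.ofReal_mul hL.le]
        apply ENNReal.ofReal_le_ofReal
        rw [Real.dist_eq, Subtype.dist_eq, Real.dist_eq]
        exact hF_hoelder _ (hcF i) x y
      exact (hcont.continuous (Real.toNNReal_pos.2 hβ0)).measurable
    have hctrm : ∀ k, Measurable (ctr k) := by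
      intro k
      exact Real.measurable_log.comp ((hcm _).comp (hρ_meas _))
    have hηp : (η ^ γ) ^ β = ε / B := by
      rw [← Real.rpow_mul hη0.le, hη, ← Real.rpow_mul (by positivity), hp]
      rw [one_div_mul_cancel (by positivity), Real.rpow_one]
    refine (aux_entropy (n₁ * n₂) (fun k v => ctr k v - w v) (fun k v => ctr k v + w v)
      ⟨?_, ?_, ?_, ?_, ?_⟩).trans ?_
    · intro k; exact (hctrm k).sub hwm
    · intro k; exact (hctrm k).add hwm
    · intro k v
      have := hw0 v
      linarith
    · intro k
      have h1 : ∀ v, ctr k v + w v - (ctr k v - w v) = 2 * (ε / 4 + (ε / (4 * S)) * R v ^ β) := by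
        intro v; simp only [w]; ring
      simp only [h1]
      apply aux_integral μ R hR_meas hR_pos β hR_int
      rw [← hI]
      have h2 : (ε / (4 * S)) ^ 2 = ε ^ 2 / (16 * (I + 1)) := by
        rw [div_pow, mul_pow, hS2]; norm_num
      rw [h2]
      have h3 : 8 * (ε ^ 2 / (16 * (I + 1))) * I ≤ ε ^ 2 / 2 := by
        have h4 : 8 * (ε ^ 2 / (16 * (I + 1))) * I = ε ^ 2 / 2 * (I / (I + 1)) := by
          field_simp; ring
        rw [h4]
        have h5 : I / (I + 1) ≤ 1 := by rw [div_le_one (by linarith)]; linarith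
        nlinarith [sq_nonneg ε]
      linarith [h3, sq_nonneg ε]
    · rintro _ ⟨θ, f, hf, rfl⟩
      obtain ⟨i, hi⟩ := hc f hf
      obtain ⟨j, hj⟩ := hτ θ
      refine ⟨e.symm (i, j), fun v => ?_⟩
      have hctr : ctr (e.symm (i, j)) v = Real.log (c i (ρ v (τ j))) := by
        simp only [ctr, Equiv.apply_symm_apply]
      have hbound : |Real.log (f (ρ v θ)) - Real.log (c i (ρ v (τ j)))| ≤ w v := by
        refine (aux_log hχ (hF_lb f hf _) (hF_lb _ (hcF i) _)).trans ?_
        rw [div_le_iff₀ hχ]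
        have h1 : |f (ρ v θ) - c i (ρ v θ)| ≤ χ * ε / 4 := hi _
        have h2 := hF_hoelder _ (hcF i) (ρ v θ) (ρ v (τ j))
        have hRp := hR_pos v
        have h3 : |((ρ v θ : ℝ)) - (ρ v (τ j) : ℝ)| ≤ R v * η ^ γ := by
          refine (hρ_hoelder v (τ j) θ).trans ?_
          gcongr
        have h4 : |((ρ v θ : ℝ)) - (ρ v (τ j) : ℝ)| ^ β ≤ R v ^ β * (ε / B) := by
          rw [← hηp, ← Real.mul_rpow hRp.le (by positivity)]
          gcongr
        have h5 : L * |((ρ v θ : ℝ)) - (ρ v (τ j) : ℝ)| ^ β ≤ L * (R v ^ β * (ε / B)) := by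
          gcongr
        have h6 : L * (R v ^ β * (ε / B)) = (ε / (4 * S)) * R v ^ β * χ := by
          rw [hB]; field_simp
        have h7 := abs_sub_le (f (ρ v θ)) (c i (ρ v θ)) (c i (ρ v (τ j)))
        have h8 : w v * χ = χ * ε / 4 + (ε / (4 * S)) * R v ^ β * χ := by
          simp only [w]; ring
        linarith
      have := abs_le.1 hbound
      simp only [hctr]
      constructor <;> linarith
    · apply ENNReal.ofReal_le_ofReal
      have hn₁R : (0 : ℝ) < n₁ := by exact_mod_cast hn₁0
      have hn₂R : (0 : ℝ) < n₂ := by exact_mod_cast hn₂0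
      push_cast
      rw [Real.log_mul hn₁R.ne' hn₂R.ne', add_mul]
      apply add_le_add
      · have h1 := Real.log_le_log hn₁R hn₁
        rw [Real.log_exp] at h1
        refine h1.trans (le_of_eq ?_)
        rw [show χ * ε / 4 = (χ / 4) * ε by ring, Real.mul_rpow (by positivity) hε.le]
        ring
      · have hX : A * (1 + 1 / η) ≤ D * ε ^ (-p) := by
          have h1 : 1 / η = B ^ p * ε ^ (-p) := by
            rw [hη, Real.div_rpow hε.le hB0.le, Real.rpow_neg hε.le]
            field_simp
          have h2 : 1 ≤ K ^ p * ε ^ (-p) := by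
            rw [Real.rpow_neg hε.le, ← div_eq_mul_inv, one_le_div (by positivity)]
            gcongr
          rw [h1, hD]
          have : A * (1 + B ^ p * ε ^ (-p)) ≤ A * (K ^ p * ε ^ (-p) + B ^ p * ε ^ (-p)) := by
            gcongr
          linarith
        have hX0 : 0 < A * (1 + 1 / η) := by positivity
        have h1 := Real.log_le_log hn₂R hn₂
        rw [Real.log_pow] at h1
        have h2 : Real.log (A * (1 + 1 / η)) ≤ D ^ t / t * ε ^ (-(1 : ℝ) / s) := by
          refine (Real.log_le_log hX0 hX).trans ?_
          refine (Real.log_le_rpow_div (by positivity) ht0).trans (le_of_eq ?_)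
          rw [Real.mul_rpow hD0.le (by positivity), ← Real.rpow_mul hε.le]
          have h3 : -p * t = -1 / s := by rw [ht]; field_simp
          rw [h3]; ring
        calc Real.log n₂ ≤ m * Real.log (A * (1 + 1 / η)) := h1
          _ ≤ m * (D ^ t / t * ε ^ (-(1 : ℝ) / s)) := by gcongr
          _ = _ := by ring
end

section
/- Let Ω be a non-empty bounded open interval in ℝ, Θ a non-empty compact subset of ℝ^m, (V,𝒱,μ) a probability space, and ρ : V × Θ → Ω measurable in its first argument and, for every v ∈ V, continuous in its second argument. Let 𝓕 be a non-empty set of non-negative bounded continuous real-valued functions on Ω whose elements are uniformly bounded away from 0, i.e., inf_{f∈𝓕} inf_{x∈Ω} f(x) > 0. Then the function L(θ,f) = ∫_V log f(ρ(v,θ)) dμ(v) is a real-valued continuous function on Θ × 𝓕, where 𝓕 is equipped with the sup-norm metric. -/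
open MeasureTheory

/-- joint continuity of the expected log-likelihood `L(θ,f)`.
Let `Ω = (a,b)` be a non-empty bounded open interval, `Θ ⊆ ℝ^m` non-empty compact,
`(V,𝒱,μ)` a probability space, and `ρ : V × Θ → Ω` measurable in its first and continuous
in its second argument.  Let `F` be a non-empty set of non-negative bounded continuous
real-valued functions on `Ω` uniformly bounded away from `0`.  Then
`L(θ,f) = ∫_V log f(ρ(v,θ)) dμ(v)` is a real-valued (in particular the integrand is
integrable) continuous function on `Θ × F`, where `F` carries the sup-norm (uniform
convergence) topology. -/
theorem stmt8_continuity_of_L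
    {m : ℕ} (a b : ℝ) (hab : a < b)
    (Θ : Set (EuclideanSpace ℝ (Fin m))) (hΘc : IsCompact Θ) (hΘne : Θ.Nonempty)
    {V : Type*} [MeasurableSpace V] (μ : Measure V) [IsProbabilityMeasure μ]
    (ρ : V → Θ → Set.Ioo a b)
    (hρ_meas : ∀ θ : Θ, Measurable fun v => ρ v θ)
    (hρ_cont : ∀ v, Continuous (ρ v))
    (F : Set (Set.Ioo a b → ℝ)) (hFne : F.Nonempty)
    (hF_cont : ∀ f ∈ F, Continuous f)
    (hF_bdd : ∀ f ∈ F, ∃ M : ℝ, ∀ x, f x ≤ M)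
    (hF_lb : ∃ c : ℝ, 0 < c ∧ ∀ f ∈ F, ∀ x, c ≤ f x) :
    (∀ θ : Θ, ∀ f ∈ F, Integrable (fun v => Real.log (f (ρ v θ))) μ) ∧
      ContinuousOn
        (fun p : Θ × UniformFun (Set.Ioo a b) ℝ =>
          ∫ v, Real.log (UniformFun.toFun p.2 (ρ v p.1)) ∂μ)
        (Set.univ ×ˢ (UniformFun.ofFun '' F)) := by
  obtain ⟨c, hc, hlb⟩ := hF_lb
  have hmeas : ∀ θ : Θ, ∀ f ∈ F, AEStronglyMeasurable (fun v => Real.log (f (ρ v θ))) μ := by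
    intro θ f hf
    exact (Real.measurable_log.comp
      ((hF_cont f hf).measurable.comp (hρ_meas θ))).aestronglyMeasurable
  have hbound : ∀ f ∈ F, ∀ M : ℝ, ∀ x, f x ≤ M →
      ‖Real.log (f x)‖ ≤ |Real.log c| + |Real.log M| := by
    intro f hf M x hM
    have h1 := hlb f hf x
    have h2 := Real.log_le_log hc h1
    have h3 := Real.log_le_log (hc.trans_le h1) hM
    rw [Real.norm_eq_abs, abs_le]
    constructor
    · linarith [neg_abs_le (Real.log c), abs_nonneg (Real.log M)]
    · linarith [le_abs_self (Real.log M), abs_nonneg (Real.log c)]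
  refine ⟨?_, ?_⟩
  · intro θ f hf
    obtain ⟨M, hM⟩ := hF_bdd f hf
    exact Integrable.of_bound (hmeas θ f hf) _
      (Filter.Eventually.of_forall fun v => hbound f hf M _ (hM _))
  · rintro ⟨θ₀, g₀⟩ ⟨-, f₀, hf₀, rfl⟩
    obtain ⟨M, hM⟩ := hF_bdd f₀ hf₀
    have : FirstCountableTopology (UniformFun (Set.Ioo a b) ℝ) :=
      UniformSpace.firstCountableTopology _
    set S : Set (Θ × UniformFun (Set.Ioo a b) ℝ) := Set.univ ×ˢ (UniformFun.ofFun '' F)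
    have hsnd : Filter.Tendsto Prod.snd (nhdsWithin (θ₀, UniformFun.ofFun f₀) S)
        (nhds (UniformFun.ofFun f₀)) :=
      (continuous_snd.tendsto (θ₀, UniformFun.ofFun f₀)).mono_left nhdsWithin_le_nhds
    have hfst : Filter.Tendsto Prod.fst (nhdsWithin (θ₀, UniformFun.ofFun f₀) S) (nhds θ₀) :=
      (continuous_fst.tendsto (θ₀, UniformFun.ofFun f₀)).mono_left nhdsWithin_le_nhds
    have hunif := UniformFun.tendsto_iff_tendstoUniformly.1 hsnd
    have hS : ∀ᶠ p in nhdsWithin (θ₀, UniformFun.ofFun f₀) S, p ∈ S := self_mem_nhdsWithin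
    apply continuousWithinAt_of_dominated
      (bound := fun _ => |Real.log c| + |Real.log (M + 1)|)
    · filter_upwards [hS]
      rintro ⟨θ, g⟩ ⟨-, f, hf, rfl⟩
      exact hmeas θ f hf
    · filter_upwards [hS, Metric.tendstoUniformly_iff.1 hunif 1 one_pos]
      rintro ⟨θ, g⟩ ⟨-, f, hf, rfl⟩ hd
      refine Filter.Eventually.of_forall fun v => hbound f hf (M + 1) _ ?_
      have h : dist (f₀ (ρ v θ)) (f (ρ v θ)) < 1 := hd (ρ v θ)
      rw [Real.dist_eq] at h
      linarith [(abs_lt.1 h).1, hM (ρ v θ)]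
    · exact integrable_const _
    · refine Filter.Eventually.of_forall fun v => ?_
      have hne : f₀ (ρ v θ₀) ≠ 0 := (hc.trans_le (hlb f₀ hf₀ _)).ne'
      refine Filter.Tendsto.log ?_ hne
      exact hunif.tendsto_comp (hF_cont f₀ hf₀).continuousAt
        (((hρ_cont v).tendsto θ₀).comp hfst)
end

section
/- Let Ω be a non-empty bounded open interval in ℝ and let p and q be bounded continuous probability densities on Ω with respect to Lebesgue measure λ (non-negative continuous functions with ∫_Ω p dλ = ∫_Ω q dλ = 1 and finite sup-norm). Let ℙ be the measure on Ω with density p. If q ≠ p (i.e., q(x) ≠ p(x) for some x ∈ Ω), then ∫_Ω log q dℙ < ∫_Ω log p dℙ, where ∫_Ω log q dℙ is a well-defined element of [−∞,∞) and ∫_Ω log p dℙ is finite. -/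
open MeasureTheory
open scoped ENNReal

/-- The extended-real-valued integral `∫ log f dℙ ∈ [−∞,∞]`, encoded as the difference of
the (luminous) integrals of the positive and negative parts of `log f`, with the convention
`log 0 = −∞` (so the negative part is `⊤` where `f` vanishes). -/
noncomputable def stmt11.extLogIntegral {α : Type*} [MeasurableSpace α]
    (P : Measure α) (f : α → ℝ) : EReal :=
  ((∫⁻ x, ENNReal.ofReal (Real.log (f x)) ∂P : ℝ≥0∞) : EReal) -
    ((∫⁻ x, (if f x = 0 then (⊤ : ℝ≥0∞) else ENNReal.ofReal (-(Real.log (f x)))) ∂P :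
      ℝ≥0∞) : EReal)

theorem stmt11.ext_eq {α : Type*} [MeasurableSpace α] (P : Measure α) (f : α → ℝ)
    (hf : AEMeasurable f P) (h1 : ∫⁻ x, ENNReal.ofReal (Real.log (f x)) ∂P < ⊤)
    (h2 : ∫⁻ x, (if f x = 0 then (⊤ : ℝ≥0∞) else ENNReal.ofReal (-(Real.log (f x)))) ∂P < ⊤) :
    (∀ᵐ x ∂P, f x ≠ 0) ∧ Integrable (fun x => Real.log (f x)) P ∧
      stmt11.extLogIntegral P f = ((∫ x, Real.log (f x) ∂P : ℝ) : EReal) := by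
  have hlog : AEMeasurable (fun x => Real.log (f x)) P := Real.measurable_log.comp_aemeasurable hf
  have hg : Measurable (fun y : ℝ => if y = 0 then (⊤ : ℝ≥0∞) else
      ENNReal.ofReal (-(Real.log y))) :=
    Measurable.ite (measurableSet_singleton 0) measurable_const
      (Real.measurable_log.neg.ennreal_ofReal)
  have hne : ∀ᵐ x ∂P, f x ≠ 0 := by
    have := ae_lt_top' (hg.comp_aemeasurable hf) h2.ne
    filter_upwards [this] with x hx h0
    simp [h0] at hx
  have heq : ∫⁻ x, (if f x = 0 then (⊤ : ℝ≥0∞) else ENNReal.ofReal (-(Real.log (f x)))) ∂P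
      = ∫⁻ x, ENNReal.ofReal (-(Real.log (f x))) ∂P := by
    apply lintegral_congr_ae
    filter_upwards [hne] with x hx
    simp [hx]
  have hi : Integrable (fun x => Real.log (f x)) P := by
    refine ⟨hlog.aestronglyMeasurable, ?_⟩
    rw [hasFiniteIntegral_iff_norm]
    calc ∫⁻ x, ENNReal.ofReal ‖Real.log (f x)‖ ∂P
        ≤ ∫⁻ x, (ENNReal.ofReal (Real.log (f x)) + ENNReal.ofReal (-(Real.log (f x)))) ∂P := by
          apply lintegral_mono
          intro x
          rcases le_total 0 (Real.log (f x)) with h | h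
          · simp [abs_of_nonneg h]
          · simp [abs_of_nonpos h]
      _ = _ := lintegral_add_left' hlog.ennreal_ofReal _
      _ < ⊤ := ENNReal.add_lt_top.2 ⟨h1, heq ▸ h2⟩
  refine ⟨hne, hi, ?_⟩
  rw [integral_eq_lintegral_pos_part_sub_lintegral_neg_part hi, stmt11.extLogIntegral, ← heq,
    EReal.coe_sub, EReal.coe_ennreal_toReal h1.ne, EReal.coe_ennreal_toReal h2.ne]

/-- the true density is the unique maximizer of the expected
log-likelihood.  Let `Ω = (a,b)` be a non-empty bounded open interval, `p, q` bounded
continuous probability densities on `Ω` w.r.t. Lebesgue measure, and `ℙ` the measure with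
density `p`.  If `q ≠ p` somewhere on `Ω`, then `∫ log q dℙ < ∫ log p dℙ`, where both sides
are well-defined elements of `[−∞,∞)` (the positive parts are finite) and the right-hand
side is finite. -/
theorem stmt11_true_density_unique_maximizer
    (a b : ℝ) (hab : a < b)
    (p q : ℝ → ℝ)
    (hp_cont : ContinuousOn p (Set.Ioo a b)) (hq_cont : ContinuousOn q (Set.Ioo a b))
    (hp_nonneg : ∀ x ∈ Set.Ioo a b, 0 ≤ p x) (hq_nonneg : ∀ x ∈ Set.Ioo a b, 0 ≤ q x)
    (hp_bdd : ∃ M : ℝ, ∀ x ∈ Set.Ioo a b, p x ≤ M)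
    (hq_bdd : ∃ M : ℝ, ∀ x ∈ Set.Ioo a b, q x ≤ M)
    (hp_int : ∫ x in Set.Ioo a b, p x = 1) (hq_int : ∫ x in Set.Ioo a b, q x = 1)
    (hne : ∃ x ∈ Set.Ioo a b, q x ≠ p x)
    (P : Measure ℝ)
    (hP : P = (volume.restrict (Set.Ioo a b)).withDensity fun x => ENNReal.ofReal (p x)) :
    (∫⁻ x, ENNReal.ofReal (Real.log (q x)) ∂P < ⊤) ∧
      (∫⁻ x, ENNReal.ofReal (Real.log (p x)) ∂P < ⊤) ∧
      (∫⁻ x, (if p x = 0 then (⊤ : ℝ≥0∞) else ENNReal.ofReal (-(Real.log (p x)))) ∂P < ⊤) ∧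
      stmt11.extLogIntegral P q < stmt11.extLogIntegral P p := by
  obtain ⟨Mp, hMp⟩ := hp_bdd
  obtain ⟨Mq, hMq⟩ := hq_bdd
  set μ : Measure ℝ := volume.restrict (Set.Ioo a b) with hμ
  have hin : ∀ᵐ x ∂μ, x ∈ Set.Ioo a b := ae_restrict_mem measurableSet_Ioo
  have hpm : AEMeasurable p μ := hp_cont.aemeasurable measurableSet_Ioo
  have hqm : AEMeasurable q μ := hq_cont.aemeasurable measurableSet_Ioo
  have hpi : Integrable p μ := by
    by_contra h
    rw [integral_undef h] at hp_int
    exact zero_ne_one hp_int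
  have hqi : Integrable q μ := by
    by_contra h
    rw [integral_undef h] at hq_int
    exact zero_ne_one hq_int
  have hac : P ≪ μ := hP ▸ withDensity_absolutelyContinuous _ _
  have hfin : IsFiniteMeasure P := by
    rw [hP]
    exact isFiniteMeasure_withDensity_ofReal hpi.2
  have hinP : ∀ᵐ x ∂P, x ∈ Set.Ioo a b := hac.ae_le hin
  have pos : ∀ (f : ℝ → ℝ) (M : ℝ), (∀ x ∈ Set.Ioo a b, 0 ≤ f x) →
      (∀ x ∈ Set.Ioo a b, f x ≤ M) → ∫⁻ x, ENNReal.ofReal (Real.log (f x)) ∂P < ⊤ := by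
    intro f M h0 hM
    calc _ ≤ ∫⁻ x, ENNReal.ofReal M ∂P := by
          apply lintegral_mono_ae
          filter_upwards [hinP] with x hx
          exact ENNReal.ofReal_le_ofReal ((Real.log_le_self (h0 x hx)).trans (hM x hx))
      _ < ⊤ := by
          rw [lintegral_const]
          exact ENNReal.mul_lt_top ENNReal.ofReal_lt_top (measure_lt_top _ _)
  have h1 := pos q Mq hq_nonneg hMq
  have h2 := pos p Mp hp_nonneg hMp
  have hg : Measurable (fun y : ℝ => if y = 0 then (⊤ : ℝ≥0∞) else
      ENNReal.ofReal (-(Real.log y))) :=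
    Measurable.ite (measurableSet_singleton 0) measurable_const
      (Real.measurable_log.neg.ennreal_ofReal)
  have h3 : ∫⁻ x, (if p x = 0 then (⊤ : ℝ≥0∞) else ENNReal.ofReal (-(Real.log (p x)))) ∂P < ⊤ := by
    have hgp : AEMeasurable (fun x => if p x = 0 then (⊤ : ℝ≥0∞) else
      ENNReal.ofReal (-(Real.log (p x)))) μ := hg.comp_aemeasurable hpm
    rw [hP, lintegral_withDensity_eq_lintegral_mul₀ hpm.ennreal_ofReal hgp]
    calc _ ≤ ∫⁻ x, 1 ∂μ := by
          apply lintegral_mono_ae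
          filter_upwards [hin] with x hx
          by_cases h0 : p x = 0
          · simp [h0]
          · have hpx : 0 < p x := lt_of_le_of_ne (hp_nonneg x hx) (Ne.symm h0)
            simp only [Pi.mul_apply, h0, if_false]
            rw [← ENNReal.ofReal_mul hpx.le]
            apply ENNReal.ofReal_le_one.2
            have := Real.log_le_self (inv_nonneg.2 hpx.le)
            rw [Real.log_inv] at this
            calc p x * -Real.log (p x) ≤ p x * (p x)⁻¹ := by gcongr
              _ = 1 := mul_inv_cancel₀ h0
      _ < ⊤ := by
          simp [hμ]
  refine ⟨h1, h2, h3, ?_⟩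
  obtain ⟨-, hpL, hpE⟩ := stmt11.ext_eq P p (hpm.mono_ac hac) h2 h3
  rw [hpE]
  by_cases h4 : ∫⁻ x, (if q x = 0 then (⊤ : ℝ≥0∞) else ENNReal.ofReal (-(Real.log (q x)))) ∂P = ⊤
  · rw [stmt11.extLogIntegral, h4, EReal.coe_ennreal_top, EReal.sub_top]
    exact EReal.bot_lt_coe _
  obtain ⟨hqne, hqL, hqE⟩ := stmt11.ext_eq P q (hqm.mono_ac hac) h1 (lt_top_iff_ne_top.2 h4)
  rw [hqE, EReal.coe_lt_coe_iff]
  by_contra! hle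
  have hqne' : ∀ᵐ x ∂μ, p x ≠ 0 → q x ≠ 0 := by
    rw [hP, ae_withDensity_iff' hpm.ennreal_ofReal] at hqne
    filter_upwards [hqne, hin] with x hx hxi h0
    exact hx (ENNReal.ofReal_pos.2 (lt_of_le_of_ne (hp_nonneg x hxi) (Ne.symm h0))).ne'
  have tr : ∀ f : ℝ → ℝ, Integrable f P →
      Integrable (fun x => p x * f x) μ ∧ ∫ x, f x ∂P = ∫ x, p x * f x ∂μ := by
    intro f hf
    have hlt : ∀ᵐ x ∂μ, ENNReal.ofReal (p x) < ⊤ := ae_of_all _ fun x => ENNReal.ofReal_lt_top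
    have hc : (fun x => (ENNReal.ofReal (p x)).toReal • f x) =ᵐ[μ] fun x => p x * f x := by
      filter_upwards [hin] with x hx
      rw [ENNReal.toReal_ofReal (hp_nonneg x hx), smul_eq_mul]
    rw [hP] at hf ⊢
    rw [integrable_withDensity_iff_integrable_smul₀' hpm.ennreal_ofReal hlt] at hf
    exact ⟨hf.congr hc, by
      rw [integral_withDensity_eq_integral_toReal_smul₀ hpm.ennreal_ofReal hlt]
      exact integral_congr_ae hc⟩
  obtain ⟨ip, ep⟩ := tr _ hpL
  obtain ⟨iq, eq⟩ := tr _ hqL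
  rw [ep, eq] at hle
  have key : ∀ᵐ x ∂μ, 0 ≤ (q x - p x) - (p x * Real.log (q x) - p x * Real.log (p x)) ∧
      ((q x - p x) - (p x * Real.log (q x) - p x * Real.log (p x)) = 0 → p x = q x) := by
    filter_upwards [hqne', hin] with x hx hxi
    by_cases h0 : p x = 0
    · simp only [h0, zero_mul, sub_zero]
      exact ⟨hq_nonneg x hxi, fun h => h.symm⟩
    · have hpx : 0 < p x := lt_of_le_of_ne (hp_nonneg x hxi) (Ne.symm h0)
      have hqx : 0 < q x := lt_of_le_of_ne (hq_nonneg x hxi) (Ne.symm (hx h0))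
      have hr : 0 < q x / p x := div_pos hqx hpx
      have e : (q x - p x) - (p x * Real.log (q x) - p x * Real.log (p x))
          = p x * (q x / p x - 1 - Real.log (q x / p x)) := by
        rw [Real.log_div hqx.ne' hpx.ne']
        field_simp
        try ring
      rw [e]
      refine ⟨mul_nonneg hpx.le (by linarith [Real.log_le_sub_one_of_pos hr]), fun h => ?_⟩
      have h' := (mul_eq_zero.1 h).resolve_left h0
      by_contra hn
      have : q x / p x ≠ 1 := fun h => hn ((div_eq_one_iff_eq h0).1 h).symm
      linarith [Real.log_lt_sub_one_of_pos hr this]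
  have hI : Integrable (fun x => (q x - p x) -
      (p x * Real.log (q x) - p x * Real.log (p x))) μ := (hqi.sub hpi).sub (iq.sub ip)
  have hz : ∫ x, ((q x - p x) - (p x * Real.log (q x) - p x * Real.log (p x))) ∂μ = 0 := by
    apply le_antisymm
    · rw [integral_sub (f := fun x => q x - p x)
        (g := fun x => p x * Real.log (q x) - p x * Real.log (p x)) (hqi.sub hpi) (iq.sub ip),
        integral_sub hqi hpi, integral_sub iq ip, hp_int, hq_int]
      linarith
    · exact integral_nonneg_of_ae (key.mono fun x hx => hx.1)
  rw [integral_eq_zero_iff_of_nonneg_ae (key.mono fun x hx => hx.1) hI] at hz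
  have hae : q =ᵐ[μ] p := by
    filter_upwards [hz, key] with x hx hk
    exact (hk.2 hx).symm
  obtain ⟨x, hx, hxne⟩ := hne
  exact hxne (Measure.eqOn_open_of_ae_eq hae isOpen_Ioo hq_cont hp_cont hx)
end

section
/- Let Ω be a non-empty bounded open interval in ℝ with Lebesgue measure λ, and let 0 < ζ ≤ M < ∞. Let p and q be Borel-measurable probability densities on Ω satisfying ζ ≤ p(x) ≤ M and ζ ≤ q(x) ≤ M for all x ∈ Ω. Then ∫_Ω q · log(p/q) dλ ≤ −(ζ/(2M²)) · ∫_Ω (p − q)² dλ. -/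
open MeasureTheory

theorem log_quad_aux (M u v : ℝ) (hu : 0 < u) (hv : 0 < v) (huM : u ≤ M) (hvM : v ≤ M) :
    Real.log u - Real.log v ≤ (u - v) / v - (u - v) ^ 2 / (2 * M ^ 2) := by
  have hM : 0 < M := lt_of_lt_of_le hu huM
  let f : ℝ → ℝ := fun t => (t - v) / v - (t - v) ^ 2 / (2 * M ^ 2) - Real.log t
  have hd : ∀ t, 0 < t → HasDerivAt f ((t - v) * (1 / (t * v) - 1 / M ^ 2)) t := by
    intro t ht
    have h1 : HasDerivAt (fun t : ℝ => t - v) 1 t := (hasDerivAt_id t).sub_const v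
    have h2 := ((h1.div_const v).sub ((h1.pow 2).div_const (2 * M ^ 2))).sub
      (Real.hasDerivAt_log ht.ne')
    refine HasDerivAt.congr_deriv (f := f) h2 ?_
    have ht0 := ht.ne'
    simp only [Nat.cast_ofNat, Nat.add_one_sub_one, pow_one, mul_one]
    field_simp
    ring
  have hpos : ∀ t, 0 < t → t ≤ M → 0 ≤ 1 / (t * v) - 1 / M ^ 2 := by
    intro t ht htM
    rw [sub_nonneg]
    apply one_div_le_one_div_of_le (by positivity)
    nlinarith
  have hfv : f v = - Real.log v := by simp [f]
  have key : f v ≤ f u := by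
    rcases le_total v u with h | h
    · have hm : MonotoneOn f (Set.Icc v u) := by
        apply monotoneOn_of_deriv_nonneg (convex_Icc _ _)
        · intro t ht
          exact (hd t (by linarith [ht.1])).continuousAt.continuousWithinAt
        · intro t ht
          rw [interior_Icc] at ht
          exact (hd t (by linarith [ht.1])).differentiableAt.differentiableWithinAt
        · intro t ht
          rw [interior_Icc] at ht
          rw [(hd t (by linarith [ht.1])).deriv]
          exact mul_nonneg (by linarith [ht.1])
            (hpos t (by linarith [ht.1]) (by linarith [ht.2]))
      exact hm ⟨le_refl _, h⟩ ⟨h, le_refl _⟩ h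
    · have hm : AntitoneOn f (Set.Icc u v) := by
        apply antitoneOn_of_deriv_nonpos (convex_Icc _ _)
        · intro t ht
          exact (hd t (by linarith [ht.1])).continuousAt.continuousWithinAt
        · intro t ht
          rw [interior_Icc] at ht
          exact (hd t (by linarith [ht.1])).differentiableAt.differentiableWithinAt
        · intro t ht
          rw [interior_Icc] at ht
          rw [(hd t (by linarith [ht.1])).deriv]
          exact mul_nonpos_of_nonpos_of_nonneg (by linarith [ht.2])
            (hpos t (by linarith [ht.1]) (by linarith [ht.2]))
      exact hm ⟨le_refl _, h⟩ ⟨h, le_refl _⟩ h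
  rw [hfv] at key
  simp only [f] at key
  linarith

/-- quantitative Gibbs inequality.
Let `Ω = (a,b)` be a non-empty bounded open interval with Lebesgue measure, `0 < ζ ≤ M < ∞`,
and let `p, q` be Borel probability densities on `Ω` with `ζ ≤ p ≤ M` and `ζ ≤ q ≤ M` on `Ω`.
Then `∫_Ω q log(p/q) dλ ≤ −(ζ/(2M²)) ∫_Ω (p−q)² dλ`. -/
theorem stmt12_quantitative_gibbs
    (a b : ℝ) (hab : a < b) (ζ M : ℝ) (hζ : 0 < ζ) (hζM : ζ ≤ M)
    (p q : ℝ → ℝ) (hp_meas : Measurable p) (hq_meas : Measurable q)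
    (hp_lb : ∀ x ∈ Set.Ioo a b, ζ ≤ p x) (hp_ub : ∀ x ∈ Set.Ioo a b, p x ≤ M)
    (hq_lb : ∀ x ∈ Set.Ioo a b, ζ ≤ q x) (hq_ub : ∀ x ∈ Set.Ioo a b, q x ≤ M)
    (hp_int : ∫ x in Set.Ioo a b, p x = 1) (hq_int : ∫ x in Set.Ioo a b, q x = 1) :
    ∫ x in Set.Ioo a b, q x * Real.log (p x / q x) ≤
      -(ζ / (2 * M ^ 2)) * ∫ x in Set.Ioo a b, (p x - q x) ^ 2 := by
  have hM : 0 < M := lt_of_lt_of_le hζ hζM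
  have bdd : ∀ (f : ℝ → ℝ) (C : ℝ), Measurable f → (∀ x ∈ Set.Ioo a b, |f x| ≤ C) →
      IntegrableOn f (Set.Ioo a b) := by
    intro f C hf hC
    refine Measure.integrableOn_of_bounded (M := C) (by simp) hf.aestronglyMeasurable ?_
    filter_upwards [ae_restrict_mem measurableSet_Ioo] with x hx
    exact hC x hx
  have ip : IntegrableOn p (Set.Ioo a b) := bdd p M hp_meas fun x hx => by
    rw [abs_le]; constructor <;> linarith [hp_lb x hx, hp_ub x hx]
  have iq : IntegrableOn q (Set.Ioo a b) := bdd q M hq_meas fun x hx => by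
    rw [abs_le]; constructor <;> linarith [hq_lb x hx, hq_ub x hx]
  have isq : IntegrableOn (fun x => (p x - q x) ^ 2) (Set.Ioo a b) :=
    bdd _ (M ^ 2) (by fun_prop) fun x hx => by
      rw [abs_of_nonneg (sq_nonneg _)]
      apply sq_le_sq'
      · linarith [hp_lb x hx, hp_ub x hx, hq_lb x hx, hq_ub x hx]
      · linarith [hp_lb x hx, hp_ub x hx, hq_lb x hx, hq_ub x hx]
  have il : IntegrableOn (fun x => q x * Real.log (p x / q x)) (Set.Ioo a b) :=
    bdd _ (M * (Real.log M - Real.log ζ)) (by fun_prop) fun x hx => by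
      have hp0 : 0 < p x := lt_of_lt_of_le hζ (hp_lb x hx)
      have hq0 : 0 < q x := lt_of_lt_of_le hζ (hq_lb x hx)
      rw [abs_mul, abs_of_pos hq0, Real.log_div hp0.ne' hq0.ne']
      have h1 := Real.log_le_log hζ (hp_lb x hx)
      have h2 := Real.log_le_log hζ (hq_lb x hx)
      have h3 := Real.log_le_log hp0 (hp_ub x hx)
      have h4 := Real.log_le_log hq0 (hq_ub x hx)
      apply mul_le_mul (hq_ub x hx) _ (abs_nonneg _) hM.le
      rw [abs_le]; constructor <;> linarith
  have hle : ∫ x in Set.Ioo a b, q x * Real.log (p x / q x) ≤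
      ∫ x in Set.Ioo a b, ((p x - q x) - (ζ / (2 * M ^ 2)) * (p x - q x) ^ 2) := by
    refine setIntegral_mono_on il ((ip.sub iq).sub (isq.const_mul _)) measurableSet_Ioo ?_
    intro x hx
    have hp0 : 0 < p x := lt_of_lt_of_le hζ (hp_lb x hx)
    have hq0 : 0 < q x := lt_of_lt_of_le hζ (hq_lb x hx)
    rw [Real.log_div hp0.ne' hq0.ne']
    have h := mul_le_mul_of_nonneg_left
      (log_quad_aux M (p x) (q x) hp0 hq0 (hp_ub x hx) (hq_ub x hx)) hq0.le
    have h2 : ζ * ((p x - q x) ^ 2 / (2 * M ^ 2)) ≤ q x * ((p x - q x) ^ 2 / (2 * M ^ 2)) :=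
      mul_le_mul_of_nonneg_right (hq_lb x hx) (by positivity)
    have h3 : q x * ((p x - q x) / q x) = p x - q x := by field_simp
    have h4 : ζ / (2 * M ^ 2) * (p x - q x) ^ 2 = ζ * ((p x - q x) ^ 2 / (2 * M ^ 2)) := by ring
    rw [mul_sub (q x) ((p x - q x) / q x), h3] at h
    rw [h4]
    linarith
  refine hle.trans (le_of_eq ?_)
  have e1 : ∫ x in Set.Ioo a b, ((p x - q x) - (ζ / (2 * M ^ 2)) * (p x - q x) ^ 2) =
      (∫ x in Set.Ioo a b, (p x - q x)) -
        ∫ x in Set.Ioo a b, (ζ / (2 * M ^ 2)) * (p x - q x) ^ 2 :=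
    integral_sub (ip.sub iq) (isq.const_mul _)
  have e2 : ∫ x in Set.Ioo a b, (p x - q x) =
      (∫ x in Set.Ioo a b, p x) - ∫ x in Set.Ioo a b, q x := integral_sub ip iq
  rw [e1, e2, hp_int, hq_int, integral_const_mul]
  ring
end

section
/- Let Ω be a non-empty bounded open interval in ℝ with Lebesgue measure λ, Θ a non-empty compact subset of ℝ^m, (V,𝒱,μ) a probability space, and ρ : V × Θ → Ω measurable in its first argument and, for every v ∈ V, continuous in its second argument. Let 𝒫 be a set of continuous probability densities on Ω that is compact with respect to the sup-norm metric, and suppose that for every θ ∈ Θ the image measure of μ under ρ(·,θ) has a density p_θ ∈ 𝒫 with respect to λ. Then for every x ∈ Ω, the map θ ↦ p_θ(x) is continuous on Θ. -/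
open MeasureTheory
open scoped ENNReal

/-- continuity of the parametrization.
Let `Ω = (a,b)` be a non-empty bounded open interval, `Θ ⊆ ℝ^m` non-empty and compact,
`(V,𝒱,μ)` a probability space and `ρ : V × Θ → Ω` measurable in its first and continuous in
its second argument.  Let `Pset` be a set of continuous probability densities on `Ω` that is
compact for the sup-norm metric (i.e. compact in the topology of uniform convergence), and
suppose that for every `θ ∈ Θ` the image measure of `μ` under `ρ(·,θ)` has density
`p_θ ∈ Pset` with respect to Lebesgue measure on `Ω`.  Then for every `x ∈ Ω` the map
`θ ↦ p_θ(x)` is continuous on `Θ`. -/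
theorem stmt15_continuity_of_parametrization
    {m : ℕ} (a b : ℝ) (hab : a < b)
    (Θ : Set (EuclideanSpace ℝ (Fin m))) (hΘc : IsCompact Θ) (hΘne : Θ.Nonempty)
    {V : Type*} [MeasurableSpace V] (μ : Measure V) [IsProbabilityMeasure μ]
    (ρ : V → Θ → Set.Ioo a b)
    (hρ_meas : ∀ θ : Θ, Measurable fun v => ρ v θ)
    (hρ_cont : ∀ v, Continuous (ρ v))
    (Pset : Set (Set.Ioo a b → ℝ))
    (hPset_cont : ∀ q ∈ Pset, Continuous q)
    (hPset_nonneg : ∀ q ∈ Pset, ∀ x, 0 ≤ q x)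
    (hPset_dens : ∀ q ∈ Pset,
      ∫⁻ x, ENNReal.ofReal (q x) ∂((volume : Measure ℝ).comap Subtype.val) = 1)
    (hPset_cpt : IsCompact (UniformFun.ofFun '' Pset : Set (UniformFun (Set.Ioo a b) ℝ)))
    (p : Θ → Set.Ioo a b → ℝ) (hp_mem : ∀ θ, p θ ∈ Pset)
    (hp_dens : ∀ θ : Θ, Measure.map (fun v => ρ v θ) μ =
      ((volume : Measure ℝ).comap Subtype.val).withDensity fun x => ENNReal.ofReal (p θ x)) :
    ∀ x : Set.Ioo a b, Continuous fun θ : Θ => p θ x := by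
  set ν : Measure (Set.Ioo a b) := (volume : Measure ℝ).comap Subtype.val with hν
  have hemb : MeasurableEmbedding (Subtype.val : Set.Ioo a b → ℝ) :=
    MeasurableEmbedding.subtype_coe measurableSet_Ioo
  have hfin : IsFiniteMeasure ν := by
    constructor
    rw [hν, hemb.comap_apply, Set.image_univ, Subtype.range_coe]
    exact measure_Ioo_lt_top
  have hopen : ν.IsOpenPosMeasure := by
    constructor
    intro U hU hne
    rw [hν, hemb.comap_apply]
    exact (isOpen_Ioo.isOpenMap_subtype_val U hU).measure_ne_zero _ (hne.image _)
  have hint : ∀ q ∈ Pset, Integrable q ν := by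
    intro q hq
    refine ⟨(hPset_cont q hq).aestronglyMeasurable, ?_⟩
    rw [hasFiniteIntegral_iff_ofReal (Filter.Eventually.of_forall (hPset_nonneg q hq)),
      hPset_dens q hq]
    exact ENNReal.one_lt_top
  -- the compact space
  set K : Set (UniformFun (Set.Ioo a b) ℝ) := UniformFun.ofFun '' Pset with hK
  have hKmem : ∀ y ∈ K, UniformFun.toFun y ∈ Pset := by
    rintro _ ⟨q, hq, rfl⟩
    exact hq
  let f : Θ → K := fun θ => ⟨UniformFun.ofFun (p θ), p θ, hp_mem θ, rfl⟩
  have hΦ : ∀ g : BoundedContinuousFunction (Set.Ioo a b) ℝ,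
      Continuous fun y : K => ∫ x, UniformFun.toFun y.1 x * g x ∂ν := by
    intro g
    rw [continuous_iff_continuousAt]
    intro y
    have hu : TendstoUniformly (fun (z : K) => UniformFun.toFun z.1) (UniformFun.toFun y.1)
        (nhds y) := by
      have := UniformFun.tendsto_iff_tendstoUniformly.1
        (continuous_subtype_val.tendsto y)
      exact this
    refine tendsto_integral_filter_of_dominated_convergence
      (fun x => (|UniformFun.toFun y.1 x| + 1) * ‖g‖) ?_ ?_ ?_ ?_
    · refine Filter.Eventually.of_forall fun z => ?_
      exact ((hPset_cont _ (hKmem _ z.2)).mul g.continuous).aestronglyMeasurable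
    · filter_upwards [Metric.tendstoUniformly_iff.1 hu 1 one_pos] with z hz
      refine Filter.Eventually.of_forall fun x => ?_
      rw [norm_mul]
      refine mul_le_mul ?_ (g.norm_coe_le_norm x) (norm_nonneg _) (by positivity)
      have h1 := hz x
      rw [Real.dist_eq] at h1
      rw [Real.norm_eq_abs]
      have := abs_sub_abs_le_abs_sub (UniformFun.toFun z.1 x) (UniformFun.toFun y.1 x)
      rw [abs_sub_comm] at this
      linarith
    · exact (((hint _ (hKmem _ y.2)).abs).add (integrable_const 1)).mul_const _
    · refine Filter.Eventually.of_forall fun x => ?_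
      exact (hu.tendsto_at x).mul_const _
  have hwd : ∀ q ∈ Pset, ∀ g : BoundedContinuousFunction (Set.Ioo a b) ℝ,
      ∫ x, g x ∂(ν.withDensity fun x => ENNReal.ofReal (q x)) = ∫ x, q x * g x ∂ν := by
    intro q hq g
    rw [integral_withDensity_eq_integral_toReal_smul
      (hPset_cont q hq).measurable.ennreal_ofReal
      (Filter.Eventually.of_forall fun x => ENNReal.ofReal_lt_top)]
    refine integral_congr_ae (Filter.Eventually.of_forall fun x => ?_)
    simp [ENNReal.toReal_ofReal (hPset_nonneg q hq x)]
  have hΨ : ∀ g : BoundedContinuousFunction (Set.Ioo a b) ℝ,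
      Continuous fun θ : Θ => ∫ x, p θ x * g x ∂ν := by
    intro g
    have : (fun θ : Θ => ∫ x, p θ x * g x ∂ν) = fun θ : Θ => ∫ v, g (ρ v θ) ∂μ := by
      funext θ
      rw [← hwd _ (hp_mem θ), ← hp_dens θ, integral_map (hρ_meas θ).aemeasurable
        g.continuous.aestronglyMeasurable]
    rw [this]
    refine continuous_of_dominated (bound := fun _ => ‖g‖) ?_ ?_ ?_ ?_
    · intro θ
      exact (g.continuous.measurable.comp (hρ_meas θ)).aestronglyMeasurable
    · exact fun θ => Filter.Eventually.of_forall fun v => g.norm_coe_le_norm _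
    · exact integrable_const _
    · exact Filter.Eventually.of_forall fun v => g.continuous.comp (hρ_cont v)
  have hfm : ∀ q ∈ Pset, IsFiniteMeasure (ν.withDensity fun x => ENNReal.ofReal (q x)) := by
    intro q hq
    refine isFiniteMeasure_withDensity ?_
    rw [hPset_dens q hq]
    exact ENNReal.one_ne_top
  have hinj : ∀ q ∈ Pset, ∀ r ∈ Pset,
      (∀ g : BoundedContinuousFunction (Set.Ioo a b) ℝ,
        ∫ x, q x * g x ∂ν = ∫ x, r x * g x ∂ν) → q = r := by
    intro q hq r hr h
    haveI := hfm q hq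
    haveI := hfm r hr
    have he : (ν.withDensity fun x => ENNReal.ofReal (q x)) =
        ν.withDensity fun x => ENNReal.ofReal (r x) := by
      refine ext_of_forall_integral_eq_of_IsFiniteMeasure fun g => ?_
      rw [hwd q hq, hwd r hr, h]
    rw [withDensity_eq_iff_of_sigmaFinite
      (hPset_cont q hq).measurable.ennreal_ofReal.aemeasurable
      (hPset_cont r hr).measurable.ennreal_ofReal.aemeasurable] at he
    refine (Continuous.ae_eq_iff_eq ν (hPset_cont q hq) (hPset_cont r hr)).1 ?_
    filter_upwards [he] with x hx
    exact (ENNReal.ofReal_eq_ofReal_iff (hPset_nonneg q hq x) (hPset_nonneg r hr x)).1 hx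
  haveI : CompactSpace K := isCompact_iff_compactSpace.1 hPset_cpt
  have hf : Continuous f := by
    rw [continuous_iff_continuousAt]
    intro θ
    refine isCompact_univ.tendsto_nhds_of_unique_mapClusterPt
      (Filter.Eventually.of_forall fun _ => Set.mem_univ _) ?_
    intro y _ hy
    apply Subtype.ext
    refine hinj _ (hKmem _ y.2) _ (hp_mem θ) fun g => ?_
    have h1 := hy.continuousAt_comp (hΦ g).continuousAt
    have h2 := (hΨ g).tendsto θ
    exact eq_of_nhds_neBot (h1.neBot.mono (inf_le_inf_left _ h2))
  intro x
  have hu : Continuous fun y : K => UniformFun.toFun y.1 x :=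
    ((UniformFun.uniformContinuous_eval ℝ x).continuous).comp continuous_subtype_val
  exact hu.comp hf
end

section
/- Let (Λ,𝒜,ℙ) be a probability space and let L^∞(ℙ) denote the Banach space of (ℙ-equivalence classes of) essentially bounded real-valued measurable functions on Λ with the essential supremum norm. Let 𝒰 = { f ∈ L^∞(ℙ) : there exists c > 0 with f ≥ c ℙ-a.e. }, which is an open subset of L^∞(ℙ), and define L : 𝒰 → ℝ by L(f) = ∫_Λ log f dℙ. Then for every positive integer α, L is α-times Fréchet differentiable on 𝒰, and its α-th Fréchet derivative at f ∈ 𝒰 is the bounded symmetric α-linear map (f₁,…,f_α) ↦ (−1)^{α−1} (α−1)! ∫_Λ f^{−α} f₁ ⋯ f_α dℙ. -/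
open MeasureTheory
open scoped ENNReal

section Abstract
open Topology

variable {R : Type*} [NormedCommRing R] [NormedAlgebra ℝ R] [CompleteSpace R]

theorem aux_contDiff (I : R →L[ℝ] ℝ) (U : Set R) (hU : IsOpen U) (hunit : ∀ f ∈ U, IsUnit f)
    (L : R → ℝ)
    (hL : ∀ f ∈ U, HasFDerivAt L (I.comp (ContinuousLinearMap.mul ℝ R (Ring.inverse f))) f)
    (n : ℕ) : ∀ f ∈ U, ContDiffAt ℝ n L f := by
  intro f hf
  have h : ContDiffAt ℝ ((n : ℕ) + 1 : WithTop ℕ∞) L f := by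
    rw [contDiffAt_succ_iff_hasFDerivAt]
    refine ⟨fun f => I.comp (ContinuousLinearMap.mul ℝ R (Ring.inverse f)),
      ⟨U, hU.mem_nhds hf, hL⟩, ?_⟩
    have h1 : ContDiffAt ℝ n (Ring.inverse : R → R) f := by
      obtain ⟨u, rfl⟩ := hunit f hf
      exact contDiffAt_ringInverse ℝ u
    have h2 : ContDiffAt ℝ n (fun f : R => ContinuousLinearMap.mul ℝ R (Ring.inverse f)) f :=
      (ContinuousLinearMap.contDiff (ContinuousLinearMap.mul ℝ R)).contDiffAt.comp f h1
    exact contDiffAt_const.clm_comp h2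
  exact h.of_le (by exact_mod_cast Nat.le_succ n)

theorem aux_inv_pow (f : R) (hf : IsUnit f) (n : ℕ) :
    HasFDerivAt (fun g : R => Ring.inverse g ^ (n + 1))
      (ContinuousLinearMap.mul ℝ R (-((n + 1 : ℕ) : R) * Ring.inverse f ^ (n + 2))) f := by
  obtain ⟨u, rfl⟩ := hf
  have h1 := (hasFDerivAt_ringInverse (𝕜 := ℝ) u).pow (n + 1)
  refine h1.congr_fderiv ?_
  ext v
  simp
  ring

theorem aux_iter (I : R →L[ℝ] ℝ) (U : Set R) (hU : IsOpen U) (hunit : ∀ f ∈ U, IsUnit f)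
    (L : R → ℝ)
    (hL : ∀ f ∈ U, HasFDerivAt L (I.comp (ContinuousLinearMap.mul ℝ R (Ring.inverse f))) f)
    (n : ℕ) : ∀ f ∈ U, ∀ v : Fin (n + 1) → R, iteratedFDeriv ℝ (n + 1) L f v =
      (-1 : ℝ) ^ n * (n.factorial : ℝ) * I (Ring.inverse f ^ (n + 1) * ∏ i, v i) := by
  induction n with
  | zero =>
    intro f hf v
    have h0 : iteratedFDeriv ℝ (0 + 1) L f v = fderiv ℝ L f (v 0) := by
      simp
    rw [h0, (hL f hf).fderiv]
    simp
  | succ n ih =>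
    intro f hf v
    rw [iteratedFDeriv_succ_apply_left]
    have hd : DifferentiableAt ℝ (iteratedFDeriv ℝ (n + 1) L) f := by
      have := aux_contDiff I U hU hunit L hL (n + 2) f hf
      exact this.differentiableAt_iteratedFDeriv (by exact_mod_cast Nat.lt_succ_self _)
    have h1 : HasFDerivAt (fun g => iteratedFDeriv ℝ (n + 1) L g (Fin.tail v))
        ((ContinuousMultilinearMap.apply ℝ (fun _ : Fin (n + 1) => R) ℝ (Fin.tail v)).comp
          (fderiv ℝ (iteratedFDeriv ℝ (n + 1) L) f)) f :=
      (ContinuousMultilinearMap.apply ℝ (fun _ : Fin (n + 1) => R) ℝ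
        (Fin.tail v)).hasFDerivAt.comp f hd.hasFDerivAt
    have h2 := ((I.hasFDerivAt.comp f
      ((aux_inv_pow f (hunit f hf) n).mul_const (∏ i, Fin.tail v i))).const_mul
        ((-1 : ℝ) ^ n * (n.factorial : ℝ)))
    have h3 := h2.congr_of_eventuallyEq (f₁ := fun g => iteratedFDeriv ℝ (n + 1) L g (Fin.tail v))
      (by
        filter_upwards [hU.mem_nhds hf] with g hg
        exact ih g hg _)
    have h4 := DFunLike.congr_fun (h1.unique h3) (v 0)
    simp only [ContinuousLinearMap.comp_apply, ContinuousMultilinearMap.apply_apply] at h4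
    rw [h4, Fin.prod_univ_succ v]
    have : Ring.inverse f ^ (n + 1 + 1) * (v 0 * ∏ i : Fin (n + 1), v i.succ)
      = Ring.inverse f ^ (n + 2) * (∏ i, Fin.tail v i) * v 0 := by
      simp only [Fin.tail]; ring
    rw [this]
    have h5 : ((∏ i, Fin.tail v i) • (-((n + 1 : ℕ) : R) * Ring.inverse f ^ (n + 2) * v 0) : R)
        = (-((n + 1 : ℕ) : ℝ)) • (Ring.inverse f ^ (n + 2) * (∏ i, Fin.tail v i) * v 0) := by
      rw [Algebra.smul_def (-((n + 1 : ℕ) : ℝ)), smul_eq_mul, map_neg, map_natCast]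
      ring
    simp only [smul_apply, ContinuousLinearMap.comp_apply,
      ContinuousLinearMap.mul_apply', h5, map_smul, smul_eq_mul]
    rw [Nat.factorial_succ]
    push_cast
    ring

end Abstract

section Linf

variable {Λ : Type*} [MeasurableSpace Λ] (P : Measure Λ)

theorem linf_ae_le {P : Measure Λ} (f : Lp ℝ ⊤ P) : ∀ᵐ x ∂P, |f x| ≤ ‖f‖ := by
  have h := ae_le_lpNorm_exponent_top (Lp.memLp f)
  filter_upwards [h] with x hx
  rw [← Real.norm_eq_abs, Lp.norm_def]
  convert hx using 1
  rw [toReal_eLpNorm (Lp.aestronglyMeasurable f)]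

theorem ae_mul_add {P : Measure Λ} (a b c : Λ →ₘ[P] ℝ) : a * (b + c) = a * b + a * c := by
  induction a, b, c using AEEqFun.induction_on₃ with
  | _ a ha b hb c hc =>
  simp only [AEEqFun.mk_mul_mk, AEEqFun.mk_add_mk, mul_add]

theorem ae_mul_zero {P : Measure Λ} (a : Λ →ₘ[P] ℝ) : a * 0 = 0 := by
  induction a using AEEqFun.induction_on with
  | _ a ha =>
  simp only [AEEqFun.zero_def, AEEqFun.mk_mul_mk]
  congr 1
  ext; simp

theorem ae_smul_mul {P : Measure Λ} (r : ℝ) (a b : Λ →ₘ[P] ℝ) : (r • a) * b = r • (a * b) := by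
  induction a, b using AEEqFun.induction_on₂ with
  | _ a ha b hb =>
  rw [AEEqFun.smul_mk, AEEqFun.mk_mul_mk, AEEqFun.mk_mul_mk, AEEqFun.smul_mk]
  simp only [smul_mul_assoc]

noncomputable def linfMul [IsFiniteMeasure P] (f g : Lp ℝ ⊤ P) : Lp ℝ ⊤ P := 
  ⟨f.1 * g.1, by
      refine Lp.mem_Lp_of_ae_bound (‖f‖ * ‖g‖) ?_
      filter_upwards [linf_ae_le f, linf_ae_le g, AEEqFun.coeFn_mul f.1 g.1] with x h1 h2 h3
      rw [h3, Pi.mul_apply, norm_mul]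
      exact mul_le_mul h1 h2 (norm_nonneg _) (norm_nonneg _)⟩

theorem linf_norm_le {P : Measure Λ} [IsFiniteMeasure P] {f : Lp ℝ ⊤ P} {C : ℝ} (hC : 0 ≤ C)
    (h : ∀ᵐ x ∂P, ‖f x‖ ≤ C) : ‖f‖ ≤ C := by
  simpa using Lp.norm_le_of_ae_bound hC h

@[reducible] noncomputable def linfRing [IsFiniteMeasure P] : NormedCommRing (Lp ℝ ⊤ P) :=
  { (inferInstance : NormedAddCommGroup (Lp ℝ ⊤ P)) with
    mul := linfMul P
    one := ⟨1, by
      refine Lp.mem_Lp_of_ae_bound 1 ?_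
      filter_upwards [AEEqFun.coeFn_one (α := Λ) (μ := P) (β := ℝ)] with x h1
      rw [h1]; simp⟩
    left_distrib := fun a b c => Subtype.ext (ae_mul_add a.1 b.1 c.1)
    right_distrib := fun a b c => Subtype.ext (by
      have := ae_mul_add c.1 a.1 b.1
      simp only [mul_comm c.1] at this
      exact this)
    zero_mul := fun a => Subtype.ext ((mul_comm _ _).trans (ae_mul_zero a.1))
    mul_zero := fun a => Subtype.ext (ae_mul_zero a.1)
    mul_assoc := fun a b c => Subtype.ext (mul_assoc a.1 b.1 c.1)
    one_mul := fun a => Subtype.ext (one_mul a.1)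
    mul_one := fun a => Subtype.ext (mul_one a.1)
    mul_comm := fun a b => Subtype.ext (mul_comm a.1 b.1)
    norm_mul_le := fun f g => by
      refine linf_norm_le (mul_nonneg (norm_nonneg _) (norm_nonneg _)) ?_
      filter_upwards [linf_ae_le f, linf_ae_le g, AEEqFun.coeFn_mul f.1 g.1] with x h1 h2 h3
      refine (congrArg norm h3).trans_le ?_
      rw [Pi.mul_apply, norm_mul]
      exact mul_le_mul h1 h2 (norm_nonneg _) (norm_nonneg _) }

attribute [local instance] linfRing

theorem linf_coe_mul [IsFiniteMeasure P] (f g : Lp ℝ ⊤ P) :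
    ∀ᵐ x ∂P, (f * g : Lp ℝ ⊤ P) x = f x * g x := AEEqFun.coeFn_mul f.1 g.1

theorem linf_coe_one [IsFiniteMeasure P] :
    ∀ᵐ x ∂P, (1 : Lp ℝ ⊤ P) x = 1 := AEEqFun.coeFn_one

@[reducible] noncomputable def linfAlg [IsFiniteMeasure P] : NormedAlgebra ℝ (Lp ℝ ⊤ P) :=
  { Algebra.ofModule (R := ℝ) (A := Lp ℝ ⊤ P)
      (fun r x y => Subtype.ext (ae_smul_mul r x.1 y.1))
      (fun r x y => Subtype.ext (by
        have := ae_smul_mul r y.1 x.1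
        simp only [mul_comm _ x.1] at this
        exact this)) with
    norm_smul_le := fun r x => norm_smul_le r x }

attribute [local instance] linfAlg

theorem linf_coe_pow [IsFiniteMeasure P] (f : Lp ℝ ⊤ P) (n : ℕ) :
    ∀ᵐ x ∂P, (f ^ n : Lp ℝ ⊤ P) x = f x ^ n := by
  induction n with
  | zero => simpa using linf_coe_one P
  | succ n ih =>
    rw [pow_succ]
    filter_upwards [ih, linf_coe_mul P (f ^ n) f] with x h1 h2
    rw [h2, h1, pow_succ]

theorem linf_coe_prod [IsFiniteMeasure P] (n : ℕ) (v : Fin n → Lp ℝ ⊤ P) :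
    ∀ᵐ x ∂P, (∏ i, v i : Lp ℝ ⊤ P) x = ∏ i, v i x := by
  induction n with
  | zero => simpa using linf_coe_one P
  | succ n ih =>
    rw [Fin.prod_univ_succ]
    filter_upwards [ih (fun i => v i.succ), linf_coe_mul P (v 0) (∏ i : Fin n, v i.succ)]
      with x h1 h2
    rw [h2, h1, Fin.prod_univ_succ]

theorem linf_inv [IsFiniteMeasure P] (f : Lp ℝ ⊤ P)
    (hf : ∃ c : ℝ, 0 < c ∧ ∀ᵐ x ∂P, c ≤ f x) :
    IsUnit f ∧ ∀ᵐ x ∂P, (Ring.inverse f) x = (f x)⁻¹ := by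
  obtain ⟨c, hc, h⟩ := hf
  have hm : MemLp (fun x => (f x)⁻¹) ⊤ P := by
    refine memLp_top_of_bound (Lp.aestronglyMeasurable f).aemeasurable.inv.aestronglyMeasurable
      c⁻¹ ?_
    filter_upwards [h] with x hx
    rw [Real.norm_eq_abs, abs_of_pos (inv_pos.2 (hc.trans_le hx))]
    exact inv_anti₀ hc hx
  have h1 : f * hm.toLp _ = 1 := by
    apply Lp.ext
    filter_upwards [h, hm.coeFn_toLp, linf_coe_mul P f (hm.toLp _), linf_coe_one P]
      with x h1 h2 h3 h4
    rw [h3, h4, h2, mul_inv_cancel₀ (hc.trans_le h1).ne']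
  have hu : IsUnit f := IsUnit.of_mul_eq_one _ h1
  refine ⟨hu, ?_⟩
  have h2 : Ring.inverse f = hm.toLp _ := by
    have := Ring.inverse_mul_cancel f hu
    calc Ring.inverse f = Ring.inverse f * (f * hm.toLp _) := by rw [h1, mul_one]
      _ = _ := by rw [← mul_assoc, this, one_mul]
  rw [h2]
  exact hm.coeFn_toLp

theorem linf_integrable {P : Measure Λ} [IsFiniteMeasure P] (f : Lp ℝ ⊤ P) : Integrable f P :=
  (Lp.memLp f).integrable le_top

noncomputable def linfInt [IsProbabilityMeasure P] : Lp ℝ ⊤ P →L[ℝ] ℝ :=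
  LinearMap.mkContinuous
    { toFun := fun f => ∫ x, f x ∂P
      map_add' := fun f g => by
        rw [← integral_add (linf_integrable f) (linf_integrable g)]
        exact integral_congr_ae (Lp.coeFn_add f g)
      map_smul' := fun r f => by
        rw [RingHom.id_apply, ← integral_smul]
        exact integral_congr_ae (Lp.coeFn_smul r f) } 1 (fun f => by
      have := norm_integral_le_of_norm_le_const (f := fun x => f x) (linf_ae_le f)
      simpa using this)

theorem linfInt_apply [IsProbabilityMeasure P] (f : Lp ℝ ⊤ P) :
    linfInt P f = ∫ x, f x ∂P := rfl

theorem linf_near [IsFiniteMeasure P] {f : Lp ℝ ⊤ P} {c : ℝ} (hf : ∀ᵐ x ∂P, c ≤ f x)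
    (g : Lp ℝ ⊤ P) : ∀ᵐ x ∂P, c - ‖g - f‖ ≤ g x := by
  filter_upwards [hf, linf_ae_le (g - f), Lp.coeFn_sub g f] with x h1 h2 h3
  rw [h3, Pi.sub_apply] at h2
  have := (abs_le.1 h2).1
  linarith

theorem linf_open [IsFiniteMeasure P] :
    IsOpen {f : Lp ℝ ⊤ P | ∃ c : ℝ, 0 < c ∧ ∀ᵐ x ∂P, c ≤ f x} := by
  rw [Metric.isOpen_iff]
  rintro f ⟨c, hc, h⟩
  refine ⟨c, hc, fun g hg => ?_⟩
  rw [mem_ball_iff_norm] at hg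
  exact ⟨c - ‖g - f‖, by linarith, linf_near P h g⟩

theorem linf_log_integrable [IsFiniteMeasure P] (f : Lp ℝ ⊤ P)
    (hf : ∃ c : ℝ, 0 < c ∧ ∀ᵐ x ∂P, c ≤ f x) : Integrable (fun x => Real.log (f x)) P := by
  obtain ⟨c, hc, h⟩ := hf
  refine Integrable.of_bound
    (Real.measurable_log.comp_aemeasurable
      (Lp.aestronglyMeasurable f).aemeasurable).aestronglyMeasurable (|Real.log c| + ‖f‖) ?_
  filter_upwards [h, linf_ae_le f] with x h1 h2
  have h3 := Real.log_le_log hc h1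
  have h4 := Real.log_le_self (hc.trans_le h1).le
  rw [Real.norm_eq_abs, abs_le]
  have := neg_abs_le (Real.log c)
  have := le_abs_self (f x)
  have := norm_nonneg f
  have := abs_nonneg (Real.log c)
  constructor <;> linarith

theorem log_bound (t : ℝ) (ht : |t| ≤ 1 / 2) : |Real.log (1 + t) - t| ≤ 2 * t ^ 2 := by
  have h := Real.abs_log_sub_add_sum_range_le (x := -t) (by rw [abs_neg]; linarith) 1
  simp only [Finset.sum_range_one, abs_neg, sub_neg_eq_add] at h
  have e : |Real.log (1 + t) - t| ≤ |t| ^ 2 / (1 - |t|) := by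
    convert h using 2
    norm_num
    ring
  refine e.trans ?_
  rw [sq_abs, div_le_iff₀ (by linarith)]
  nlinarith [sq_nonneg t]

theorem linf_hasFDeriv [IsProbabilityMeasure P] (f : Lp ℝ ⊤ P)
    (hf : ∃ c : ℝ, 0 < c ∧ ∀ᵐ x ∂P, c ≤ f x) :
    HasFDerivAt (fun g : Lp ℝ ⊤ P => ∫ x, Real.log (g x) ∂P)
      ((linfInt P).comp (ContinuousLinearMap.mul ℝ (Lp ℝ ⊤ P) (Ring.inverse f))) f := by
  obtain ⟨c, hc, h⟩ := hf
  obtain ⟨-, hinv⟩ := linf_inv P f ⟨c, hc, h⟩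
  rw [hasFDerivAt_iff_isLittleO_nhds_zero]
  refine Asymptotics.IsBigO.trans_isLittleO (g := fun h : Lp ℝ ⊤ P => ‖h‖ ^ 2) ?_
    (Asymptotics.isLittleO_norm_pow_id one_lt_two)
  refine Asymptotics.IsBigO.of_bound (2 / c ^ 2) ?_
  filter_upwards [Metric.ball_mem_nhds (0 : Lp ℝ ⊤ P) (half_pos hc)] with k hk
  rw [mem_ball_zero_iff] at hk
  have hU : ∃ c : ℝ, 0 < c ∧ ∀ᵐ x ∂P, c ≤ (f + k) x := by
    refine ⟨c - ‖(f + k) - f‖, ?_, linf_near P h (f + k)⟩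
    rw [add_sub_cancel_left]; linarith
  rw [ContinuousLinearMap.comp_apply, ContinuousLinearMap.mul_apply', linfInt_apply,
    ← integral_sub (linf_log_integrable P _ hU) (linf_log_integrable P _ ⟨c, hc, h⟩),
    ← integral_sub (f := fun x => Real.log ((f + k) x) - Real.log (f x))
      ((linf_log_integrable P _ hU).sub (linf_log_integrable P _ ⟨c, hc, h⟩))
      (linf_integrable _)]
  have hb : ∀ᵐ x ∂P, ‖Real.log ((f + k) x) - Real.log (f x) - (Ring.inverse f * k) x‖
      ≤ 2 / c ^ 2 * ‖k‖ ^ 2 := by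
    filter_upwards [h, hinv, linf_ae_le k, Lp.coeFn_add f k, linf_coe_mul P (Ring.inverse f) k]
      with x h1 h2 h3 h4 h5
    have hp : 0 < f x := hc.trans_le h1
    have ht : |(f x)⁻¹ * k x| ≤ ‖k‖ / c := by
      rw [abs_mul, abs_of_pos (inv_pos.2 hp), div_eq_inv_mul]
      exact mul_le_mul (inv_anti₀ hc h1) h3 (abs_nonneg _) (inv_pos.2 hc).le
    have ht2 : |(f x)⁻¹ * k x| ≤ 1 / 2 := by
      refine ht.trans ?_
      rw [div_le_iff₀ hc]; linarith
    have e : f x + k x = f x * (1 + (f x)⁻¹ * k x) := by field_simp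
    have hp2 : 0 < 1 + (f x)⁻¹ * k x := by
      have := (abs_le.1 ht2).1
      linarith
    rw [h4, h5, h2, Pi.add_apply, e, Real.log_mul hp.ne' hp2.ne', add_sub_cancel_left,
      Real.norm_eq_abs]
    refine (log_bound _ ht2).trans ?_
    rw [← sq_abs]
    calc 2 * |(f x)⁻¹ * k x| ^ 2 ≤ 2 * (‖k‖ / c) ^ 2 := by gcongr
      _ = _ := by rw [div_pow]; ring
  have := norm_integral_le_of_norm_le_const hb
  simpa using this

theorem linf_main [IsProbabilityMeasure P] (n : ℕ) (f : Lp ℝ ⊤ P)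
    (hf : f ∈ {f : Lp ℝ ⊤ P | ∃ c : ℝ, 0 < c ∧ ∀ᵐ x ∂P, c ≤ f x}) :
    ContDiffAt ℝ (n + 1 : ℕ) (fun g : Lp ℝ ⊤ P => ∫ x, Real.log (g x) ∂P) f ∧
          ∀ v : Fin (n + 1) → Lp ℝ ⊤ P,
            (iteratedFDeriv ℝ (n + 1) (fun g : Lp ℝ ⊤ P => ∫ x, Real.log (g x) ∂P) f) v =
              (-1 : ℝ) ^ n * (Nat.factorial n : ℝ) *
                ∫ x, (∏ i, v i x) / f x ^ (n + 1) ∂P := by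
  refine ⟨aux_contDiff (linfInt P) _ (linf_open P) (fun f hf => (linf_inv P f hf).1) _
    (linf_hasFDeriv P) _ f hf, fun v => ?_⟩
  have := aux_iter (linfInt P) _ (linf_open P) (fun f hf => (linf_inv P f hf).1) _
    (linf_hasFDeriv P) n f hf v
  refine this.trans ?_
  rw [linfInt_apply]
  congr 1
  refine integral_congr_ae ?_
  filter_upwards [linf_coe_mul P (Ring.inverse f ^ (n + 1)) (∏ i, v i), linf_coe_prod P _ v,
    linf_coe_pow P (Ring.inverse f) (n + 1), (linf_inv P f hf).2] with x h1 h2 h3 h4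
  rw [h1, h2, h3, h4, inv_pow, div_eq_inv_mul]

end Linf

/-- Fréchet derivatives of the expected log-likelihood on `L^∞`.
Let `(Λ,𝒜,ℙ)` be a probability space and `𝒰 = {f ∈ L^∞(ℙ) : ∃ c > 0, f ≥ c ℙ-a.e.}`, which
is an open subset of `L^∞(ℙ)`.  Define `L(f) = ∫ log f dℙ` on `L^∞(ℙ)`.  Then for every
positive integer `α`, `L` is `α`-times (continuously) Fréchet differentiable at every point
of `𝒰`, and its `α`-th Fréchet derivative at `f ∈ 𝒰` is the bounded symmetric `α`-linear
map `(f₁,…,f_α) ↦ (−1)^{α−1}(α−1)! ∫ f^{−α} f₁ ⋯ f_α dℙ`. -/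
theorem stmt16_frechet_derivatives_of_L
    {Λ : Type*} [MeasurableSpace Λ] (P : Measure Λ) [IsProbabilityMeasure P] :
    IsOpen {f : Lp ℝ ⊤ P | ∃ c : ℝ, 0 < c ∧ ∀ᵐ x ∂P, c ≤ f x} ∧
      ∀ α : ℕ, 0 < α →
        ∀ f ∈ {f : Lp ℝ ⊤ P | ∃ c : ℝ, 0 < c ∧ ∀ᵐ x ∂P, c ≤ f x},
          ContDiffAt ℝ α (fun g : Lp ℝ ⊤ P => ∫ x, Real.log (g x) ∂P) f ∧
          ∀ v : Fin α → Lp ℝ ⊤ P,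
            (iteratedFDeriv ℝ α (fun g : Lp ℝ ⊤ P => ∫ x, Real.log (g x) ∂P) f) v =
              (-1 : ℝ) ^ (α - 1) * (Nat.factorial (α - 1) : ℝ) *
                ∫ x, (∏ i, v i x) / f x ^ α ∂P := by
  refine ⟨linf_open P, fun α hα f hf => ?_⟩
  obtain ⟨n, rfl⟩ : ∃ n, α = n + 1 := ⟨α - 1, by omega⟩
  exact linf_main P n f hf
end
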